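/- Four distinct spheres in ℝ³ whose centers are not collinear have at most twelve common tangent lines. -/

import Mathlib

noncomputable section

abbrev Pt3 := EuclideanSpace ℝ (Fin 3)

/-- The line through `a` with direction `v` (assumed nonzero where relevant). -/
def lineThrough3 (a v : Pt3) : Set Pt3 := {x : Pt3 | ∃ t : ℝ, x = a + t • v}

/-- A line in space. -/
def IsLine3 (l : Set Pt3) : Prop := ∃ a v : Pt3, v ≠ 0 ∧ l = lineThrough3 a v

/-- Two subsets of space are tangent if they intersect in exactly one point. -/
def Tangent3 (a b : Set Pt3) : Prop := ∃ p : Pt3, a ∩ b = {p}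

/-! Move the first center to the origin and describe a common tangent by a direction `v` and the
foot `p` of the perpendicular from the origin. Tangency to the sphere about `d i` prescribes
`2 * ‖v‖ ^ 2 * ⟪d i, p⟫` as a quadratic expression in `v`.

If the `d i` form a basis, `v` determines `p`, and `⟪p, v⟫ = 0` and `‖p‖ ^ 2 = R` become a cubic and
a quartic equation for the point `v` of the projective plane. A common component of the two curves
would contain a complex point of the conic `‖v‖ ^ 2 = 0`; there the equations say that `x`, with
coordinates `x i = ⟪d i, v⟫`, and `x ^ 2` span an isotropic subspace, which forces `x = 0`. So
Bézout's theorem leaves at most `3 * 4` directions.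

If `d 2 = a • d 0 + b • d 1`, let `x` be the in-plane component of `v` and `t = ‖v‖ ^ 2`.
Eliminating the components normal to the plane leaves one equation in `(x, t)`, and each solution
gives at most two lines, mirror images in the plane. The linear relation yields `k * t = Q x` for a
nonzero quadratic form `Q`. If `k ≠ 0`, substituting `t = Q x / k` gives a nonzero sextic on the
projective line, hence at most `6 * 2` tangents. If `k = 0`, there are at most two zeros `x` of `Q`,
each with at most three values of `t`, hence at most `2 * 3 * 2` tangents not perpendicular to the
plane; if a perpendicular one exists, it is unique and the cubic in `t` drops to a quadratic:
`1 + 2 * 2 * 2`. -/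

section HomogeneousForms

open MvPolynomial Module
open scoped LinearAlgebra.Projectivization

section Components

variable {σ R : Type*} [CommSemiring R]

attribute [local instance] MvPolynomial.gradedAlgebra in
lemma homogeneousComponent_mul_of_isHomogeneous_left {f : MvPolynomial σ R} {a : ℕ}
    (hf : f.IsHomogeneous a) (b : ℕ) (g : MvPolynomial σ R) :
    homogeneousComponent (a + b) (f * g) = f * homogeneousComponent b g := by
  have h := DirectSum.coe_decompose_mul_add_of_left_mem (homogeneousSubmodule σ R) (j := b)
    (b := g) hf
  exact (decomposition.decompose'_apply _ _).symm.trans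
    (h.trans (congrArg (f * ·) (decomposition.decompose'_apply _ _)))

lemma homogeneousComponent_mul_of_totalDegree_le {f g : MvPolynomial σ R} {a b : ℕ}
    (hf : f.totalDegree ≤ a) (hg : g.totalDegree ≤ b) :
    homogeneousComponent (a + b) (f * g) =
      homogeneousComponent a f * homogeneousComponent b g := by
  classical
  rw [← homogeneousComponent_mul_of_isHomogeneous_left (homogeneousComponent_isHomogeneous a f)]
  ext d
  simp only [coeff_homogeneousComponent]
  split_ifs with hd
  · rw [coeff_mul, coeff_mul]
    refine Finset.sum_congr rfl fun ⟨x, y⟩ hxy ↦ ?_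
    have hdeg : x.degree + y.degree = a + b := by
      rw [← hd, ← Finset.HasAntidiagonal.mem_antidiagonal.1 hxy, map_add]
    rw [coeff_homogeneousComponent]
    by_cases hx : x.degree = a
    · rw [if_pos hx]
    · rw [if_neg hx]
      rcases lt_or_gt_of_ne hx with hlt | hgt
      · have : coeff y g = 0 := coeff_eq_zero_of_totalDegree_lt (by
          rw [← Finsupp.degree_apply]; omega)
        simp only [this, mul_zero]
      · have : coeff x f = 0 := coeff_eq_zero_of_totalDegree_lt (by
          rw [← Finsupp.degree_apply]; omega)
        simp only [this, zero_mul]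
  · rfl

lemma homogeneousComponent_totalDegree_dvd [NoZeroDivisors R] {f g : MvPolynomial σ R} {n : ℕ}
    (hf : f.IsHomogeneous n) (hgf : g ∣ f) : homogeneousComponent g.totalDegree g ∣ f := by
  obtain rfl | hf₀ := eq_or_ne f 0
  · exact dvd_zero _
  obtain ⟨h, rfl⟩ := hgf
  have hdeg : g.totalDegree + h.totalDegree = n := by
    rw [← totalDegree_mul_of_isDomain (left_ne_zero_of_mul hf₀) (right_ne_zero_of_mul hf₀),
      hf.totalDegree hf₀]
  refine ⟨homogeneousComponent h.totalDegree h, ?_⟩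
  rw [← homogeneousComponent_mul_of_totalDegree_le le_rfl le_rfl, hdeg,
    homogeneousComponent_eq_self hf]

end Components

section Dimension

variable (σ K : Type*) [Field K]

instance finiteDimensional_homogeneousSubmodule [Finite σ] (n : ℕ) :
    FiniteDimensional K (homogeneousSubmodule σ K n) :=
  Module.Finite.iff_fg.2 (homogeneousSubmodule_fg σ K n)

lemma finrank_homogeneousSubmodule [Fintype σ] (n : ℕ) :
    finrank K (homogeneousSubmodule σ K n) = (Fintype.card σ).multichoose n := by
  classical
  have hmem (d : σ →₀ ℕ) : d ∈ Finset.univ.finsuppAntidiag n ↔ d ∈ {d : σ →₀ ℕ | d.degree = n} := by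
    simp only [Finset.mem_finsuppAntidiag, Finset.subset_univ, and_true, Set.mem_ofPred_eq,
      Finsupp.degree_eq_sum]
  let : Fintype {d : σ →₀ ℕ | d.degree = n} := Fintype.ofFinset _ hmem
  rw [homogeneousSubmodule_eq_finsupp_supported,
    (AddMonoidAlgebra.supportedEquivFinsupp (R := K) (S := K) _).finrank_eq, finrank_finsupp_self,
    Fintype.card_of_finset' _ hmem, Finset.card_finsuppAntidiag_nat_eq_multichoose,
    Finset.card_univ]

lemma two_mul_finrank_homogeneousSubmodule_fin_three (n : ℕ) :
    2 * finrank K (homogeneousSubmodule (Fin 3) K n) = (n + 1) * (n + 2) := by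
  rw [finrank_homogeneousSubmodule, Fintype.card_fin, Nat.multichoose_eq,
    show 3 + n - 1 = n + 2 by omega, Nat.choose_symm_add, mul_comm, Nat.choose_two_right,
    Nat.div_mul_cancel (Nat.even_mul_pred_self _).two_dvd, mul_comm]
  rfl

end Dimension

section Points

variable {σ K : Type*} [Field K]

/-- Evaluation of forms of degree `n` at the chosen representatives of a finite set of points of
projective space. -/
def evalAtPoints (n : ℕ) (s : Finset (ℙ K (σ → K))) :
    homogeneousSubmodule σ K n →ₗ[K] s → K :=
  LinearMap.pi fun P ↦ (aeval P.1.rep).toLinearMap ∘ₗ (homogeneousSubmodule σ K n).subtype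

lemma evalAtPoints_apply (n : ℕ) (s : Finset (ℙ K (σ → K))) (F : homogeneousSubmodule σ K n)
    (P : s) : evalAtPoints n s F P = eval P.1.rep F.1 :=
  rfl

variable [Finite σ]

lemma exists_linearForm_separating {P Q : ℙ K (σ → K)} (hPQ : P ≠ Q) :
    ∃ L : MvPolynomial σ K, L.IsHomogeneous 1 ∧ eval P.rep L ≠ 0 ∧ eval Q.rep L = 0 := by
  classical
  cases nonempty_fintype σ
  have hP : P.rep ∉ K ∙ Q.rep := fun h ↦ by
    obtain ⟨a, ha⟩ := Submodule.mem_span_singleton.1 h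
    apply hPQ
    rw [← P.mk_rep, ← Q.mk_rep]
    exact (Projectivization.mk_eq_mk_iff' K _ _ P.rep_nonzero Q.rep_nonzero).2 ⟨a, ha⟩
  obtain ⟨f, hfP, hfQ⟩ := Submodule.exists_le_ker_of_notMem hP
  let L := f.toMvPolynomial (Pi.basisFun K σ) (Basis.singleton Unit K) ()
  have heval (v : σ → K) : eval v L = f v := by
    have h := f.toMvPolynomial_eval_eq_apply (Pi.basisFun K σ) (Basis.singleton Unit K) ()
      ((Pi.basisFun K σ).repr v)
    rwa [LinearEquiv.symm_apply_apply, Basis.singleton_repr] at h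
  refine ⟨L, LinearMap.toMvPolynomial_isHomogeneous _ _ _ _, ?_, ?_⟩
  · rwa [heval]
  · rw [heval]
    exact hfQ (Submodule.mem_span_singleton_self _)

lemma exists_form_separating {s : Finset (ℙ K (σ → K))} {P : ℙ K (σ → K)} (hP : P ∉ s)
    {n : ℕ} (hn : s.card ≤ n) :
    ∃ F : MvPolynomial σ K, F.IsHomogeneous n ∧ eval P.rep F ≠ 0 ∧ ∀ Q ∈ s, eval Q.rep F = 0 := by
  classical
  have hne (Q : s) : P ≠ Q := fun h ↦ hP (h ▸ Q.2)
  choose L hL hLP hLQ using fun Q : s ↦ exists_linearForm_separating (hne Q)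
  obtain ⟨i, hi⟩ := Function.ne_iff.1 P.rep_nonzero
  refine ⟨X i ^ (n - s.card) * ∏ Q, L Q, ?_, ?_, fun Q hQ ↦ ?_⟩
  · convert (isHomogeneous_X_pow i (n - s.card)).mul
      (IsHomogeneous.prod Finset.univ L (fun _ ↦ 1) fun Q _ ↦ hL Q) using 1
    simp only [Finset.sum_const, Finset.card_univ, Fintype.card_coe, smul_eq_mul, mul_one]
    omega
  · rw [map_mul, map_pow, eval_X, map_prod]
    exact mul_ne_zero (pow_ne_zero _ hi) (Finset.prod_ne_zero_iff.2 fun Q _ ↦ hLP Q)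
  · rw [map_mul, map_prod, Finset.prod_eq_zero (Finset.mem_univ ⟨Q, hQ⟩) (hLQ ⟨Q, hQ⟩), mul_zero]

lemma evalAtPoints_surjective {n : ℕ} {s : Finset (ℙ K (σ → K))} (hs : s.card ≤ n + 1) :
    Function.Surjective (evalAtPoints n s) := by
  classical
  rw [← LinearMap.range_eq_top, eq_top_iff, ← (Pi.basisFun K s).span_eq, Submodule.span_le]
  rintro _ ⟨P, rfl⟩
  have hcard : (s.erase P.1).card ≤ n := by
    rw [Finset.card_erase_of_mem P.2]; omega
  obtain ⟨F, hF, hFP, hFs⟩ := exists_form_separating (Finset.notMem_erase P.1 s) hcard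
  refine ⟨(eval P.1.rep F)⁻¹ • ⟨F, hF⟩, funext fun Q ↦ ?_⟩
  rw [map_smul, Pi.smul_apply, evalAtPoints_apply, Pi.basisFun_apply, smul_eq_mul]
  obtain rfl | hQ := eq_or_ne Q P
  · rw [inv_mul_cancel₀ hFP, Pi.single_eq_same]
  · rw [hFs Q (Finset.mem_erase.2 ⟨Subtype.coe_ne_coe.2 hQ, Q.2⟩), mul_zero,
      Pi.single_eq_of_ne hQ]

lemma finrank_add_card_le_of_eval_eq_zero {n : ℕ} {s : Finset (ℙ K (σ → K))}
    (hs : s.card ≤ n + 1) {W : Submodule K (homogeneousSubmodule σ K n)}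
    (hW : ∀ F ∈ W, ∀ P ∈ s, eval P.rep F.1 = 0) :
    finrank K W + s.card ≤ finrank K (homogeneousSubmodule σ K n) := by
  have hle : W ≤ LinearMap.ker (evalAtPoints n s) := by
    refine fun F hF ↦ LinearMap.mem_ker.2 (funext fun P ↦ ?_)
    rw [evalAtPoints_apply, hW F hF P P.2, Pi.zero_apply]
  have hrank := (evalAtPoints n s).finrank_range_add_finrank_ker
  have hrange : finrank K (LinearMap.range (evalAtPoints n s)) = s.card := by
    rw [LinearMap.range_eq_top.2 (evalAtPoints_surjective hs), finrank_top,
      finrank_fintype_fun_eq_card, Fintype.card_coe]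
  have := Submodule.finrank_mono hle
  omega

lemma encard_le_of_eval_eq_zero {m n : ℕ} (hmn : m ≤ n)
    {W : Submodule K (homogeneousSubmodule σ K n)} {Z : Set (ℙ K (σ → K))}
    (hW : ∀ F ∈ W, ∀ P ∈ Z, eval P.rep F.1 = 0)
    (hdim : finrank K (homogeneousSubmodule σ K n) < finrank K W + (m + 1)) : Z.encard ≤ m := by
  by_contra! hlt
  obtain ⟨s, hsZ, hs⟩ := Set.exists_subset_encard_eq (Order.add_one_le_of_lt hlt)
  lift s to Finset (ℙ K (σ → K)) using
    Set.finite_of_encard_eq_coe (k := m + 1) (by exact_mod_cast hs)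
  have hcard : s.card = m + 1 := by
    rw [Set.encard_coe_eq_coe_finsetCard] at hs
    exact_mod_cast hs
  have := finrank_add_card_le_of_eval_eq_zero (s := s) (by omega)
    fun F hF P hP ↦ hW F hF P (hsZ hP)
  omega

end Points

section BinaryForms

variable {K : Type*} [Field K]

lemma encard_zeros_binaryForm_le {F : MvPolynomial (Fin 2) K} {n : ℕ} (hF : F.IsHomogeneous n)
    (hF₀ : F ≠ 0) : {P : ℙ K (Fin 2 → K) | eval P.rep F = 0}.encard ≤ n := by
  refine encard_le_of_eval_eq_zero le_rfl
    (W := K ∙ (⟨F, hF⟩ : homogeneousSubmodule (Fin 2) K n))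
    (fun G hG P (hP : eval P.rep F = 0) ↦ ?_) ?_
  · obtain ⟨a, rfl⟩ := Submodule.mem_span_singleton.1 hG
    rw [Submodule.coe_smul, smul_eval, hP, mul_zero]
  · rw [finrank_span_singleton (Subtype.coe_ne_coe.1 hF₀), finrank_homogeneousSubmodule,
      Fintype.card_fin, Nat.multichoose_two]
    omega

end BinaryForms

section TernaryForms

variable {K : Type*} [Field K]

/-- Multiplication by a form `F` of degree `m`, from forms of degree `a` to forms of degree
`b = m + a`. -/
def mulForm {σ : Type*} {F : MvPolynomial σ K} {m a b : ℕ} (hF : F.IsHomogeneous m)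
    (h : m + a = b) : homogeneousSubmodule σ K a →ₗ[K] homogeneousSubmodule σ K b :=
  (LinearMap.mulLeft K F).restrict fun _ hA ↦ h ▸ hF.mul hA

variable {F G : MvPolynomial (Fin 3) K} {m n : ℕ}

/-- The graded piece `(A, B) ↦ F * A + G * B` of the last map of the Koszul complex of two
ternary forms; its range is the part of degree `m + n + s` of the ideal generated by `F`, `G`. -/
def koszulMap (hF : F.IsHomogeneous m) (hG : G.IsHomogeneous n) (s : ℕ) :
    homogeneousSubmodule (Fin 3) K (n + s) × homogeneousSubmodule (Fin 3) K (m + s) →ₗ[K]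
      homogeneousSubmodule (Fin 3) K (m + n + s) :=
  (mulForm hF (by omega)).coprod (mulForm hG (by omega))

lemma koszulMap_apply (hF : F.IsHomogeneous m) (hG : G.IsHomogeneous n) {s : ℕ}
    (A : homogeneousSubmodule (Fin 3) K (n + s)) (B : homogeneousSubmodule (Fin 3) K (m + s)) :
    (koszulMap hF hG s (A, B) : MvPolynomial (Fin 3) K) = F * A + G * B := rfl

/-- The map `C ↦ (G * C, -F * C)` onto the trivial syzygies of two ternary forms. -/
def koszulSyzygy (hF : F.IsHomogeneous m) (hG : G.IsHomogeneous n) (s : ℕ) :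
    homogeneousSubmodule (Fin 3) K s →ₗ[K]
      homogeneousSubmodule (Fin 3) K (n + s) × homogeneousSubmodule (Fin 3) K (m + s) :=
  (mulForm hG rfl).prod (-mulForm hF rfl)

lemma finrank_range_koszulMap (hF : F.IsHomogeneous m) (hG : G.IsHomogeneous n) (s : ℕ) :
    finrank K (LinearMap.range (koszulMap hF hG s)) + m * n +
        finrank K (LinearMap.ker (koszulMap hF hG s)) =
      finrank K (homogeneousSubmodule (Fin 3) K (m + n + s)) +
        finrank K (homogeneousSubmodule (Fin 3) K s) := by
  have hrank := (koszulMap hF hG s).finrank_range_add_finrank_ker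
  rw [finrank_prod] at hrank
  have h₁ := two_mul_finrank_homogeneousSubmodule_fin_three K (m + n + s)
  have h₂ := two_mul_finrank_homogeneousSubmodule_fin_three K s
  have h₃ := two_mul_finrank_homogeneousSubmodule_fin_three K (n + s)
  have h₄ := two_mul_finrank_homogeneousSubmodule_fin_three K (m + s)
  nlinarith only [hrank, h₁, h₂, h₃, h₄]

lemma finrank_range_koszulMap_add_le (hF : F.IsHomogeneous m) (hG : G.IsHomogeneous n)
    (hF₀ : F ≠ 0) (s : ℕ) :
    finrank K (LinearMap.range (koszulMap hF hG s)) + m * n ≤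
      finrank K (homogeneousSubmodule (Fin 3) K (m + n + s)) := by
  have hker : LinearMap.range (koszulSyzygy hF hG s) ≤ LinearMap.ker (koszulMap hF hG s) := by
    rintro _ ⟨C, rfl⟩
    refine LinearMap.mem_ker.2 (Subtype.ext ?_)
    change F * (G * C.1) + G * -(F * C.1) = 0
    ring
  have hinj : Function.Injective (koszulSyzygy hF hG s) := fun C C' h ↦ by
    have h' : -(F * C.1) = -(F * C'.1) := congrArg Subtype.val (congrArg Prod.snd h)
    exact Subtype.ext (mul_left_cancel₀ hF₀ (neg_inj.1 h'))
  have := Submodule.finrank_mono hker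
  rw [LinearMap.finrank_range_of_inj hinj] at this
  have := finrank_range_koszulMap hF hG s
  omega

lemma ker_koszulMap_le (hF : F.IsHomogeneous m) (hG : G.IsHomogeneous n)
    (hG₀ : G ≠ 0) (hFG : IsRelPrime F G) (s : ℕ) :
    LinearMap.ker (koszulMap hF hG s) ≤ LinearMap.range (koszulSyzygy hF hG s) := by
  rintro ⟨A, B⟩ hAB
  have hAB : F * A.1 + G * B.1 = 0 := congrArg Subtype.val (LinearMap.mem_ker.1 hAB)
  obtain ⟨C, hC⟩ : G ∣ A.1 :=
    hFG.symm.dvd_of_dvd_mul_left ⟨-B.1, by linear_combination hAB⟩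
  have hA : A.1 = G * homogeneousComponent s C := by
    rw [← homogeneousComponent_mul_of_isHomogeneous_left hG, ← hC,
      homogeneousComponent_eq_self A.2]
  have hB : B.1 = -(F * homogeneousComponent s C) :=
    mul_left_cancel₀ hG₀ (by linear_combination hAB - F * hA)
  exact ⟨⟨_, homogeneousComponent_isHomogeneous s C⟩,
    Prod.ext (Subtype.ext hA.symm) (Subtype.ext hB.symm)⟩

lemma finrank_le_finrank_range_koszulMap_add (hF : F.IsHomogeneous m) (hG : G.IsHomogeneous n)
    (hG₀ : G ≠ 0) (hFG : IsRelPrime F G) (s : ℕ) :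
    finrank K (homogeneousSubmodule (Fin 3) K (m + n + s)) ≤
      finrank K (LinearMap.range (koszulMap hF hG s)) + m * n := by
  have := Submodule.finrank_mono (ker_koszulMap_le hF hG hG₀ hFG s)
  have := LinearMap.finrank_range_le (koszulSyzygy hF hG s)
  have := finrank_range_koszulMap hF hG s
  omega

theorem encard_commonZeros_le_of_isRelPrime (hF : F.IsHomogeneous m) (hG : G.IsHomogeneous n)
    (hFG : IsRelPrime F G) :
    {P : ℙ K (Fin 3 → K) | eval P.rep F = 0 ∧ eval P.rep G = 0}.encard ≤ m * n := by
  obtain rfl | hG₀ := eq_or_ne G 0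
  · have hunit (P : ℙ K (Fin 3 → K)) : eval P.rep F ≠ 0 :=
      ((isRelPrime_zero_right.1 hFG).map (eval P.rep)).ne_zero
    simp only [hunit, false_and, Set.ofPred_false, Set.encard_empty, zero_le]
  · have hdim := finrank_le_finrank_range_koszulMap_add hF hG hG₀ hFG (m * n)
    refine mod_cast encard_le_of_eval_eq_zero (m := m * n) le_add_self
      (W := LinearMap.range (koszulMap hF hG (m * n))) ?_ (by omega)
    rintro _ ⟨⟨A, B⟩, rfl⟩ P ⟨hFP, hGP⟩
    rw [koszulMap_apply, map_add, map_mul, map_mul, hFP, hGP, zero_mul, zero_mul, add_zero]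

lemma range_koszulMap_ne_top (hF : F.IsHomogeneous m) (hG : G.IsHomogeneous n) (hF₀ : F ≠ 0)
    (hm : 0 < m) (hn : 0 < n) (s : ℕ) : LinearMap.range (koszulMap hF hG s) ≠ ⊤ := fun htop ↦ by
  have hdim := finrank_range_koszulMap_add_le hF hG hF₀ s
  rw [htop, finrank_top] at hdim
  have := Nat.mul_pos hm hn
  omega

lemma mem_range_koszulMap (hF : F.IsHomogeneous m) (hG : G.IsHomogeneous n) {s : ℕ}
    {H : homogeneousSubmodule (Fin 3) K (m + n + s)} (hH : H.1 ∈ Ideal.span {F, G}) :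
    H ∈ LinearMap.range (koszulMap hF hG s) := by
  obtain ⟨A, B, hAB⟩ := Ideal.mem_span_pair.1 hH
  refine ⟨(⟨_, homogeneousComponent_isHomogeneous (n + s) A⟩,
    ⟨_, homogeneousComponent_isHomogeneous (m + s) B⟩), Subtype.ext ?_⟩
  rw [koszulMap_apply, ← homogeneousComponent_mul_of_isHomogeneous_left hF,
    ← homogeneousComponent_mul_of_isHomogeneous_left hG, ← homogeneousComponent_eq_self H.2, ← hAB,
    map_add, mul_comm A, mul_comm B, add_assoc m, add_left_comm n]

theorem exists_common_zero_of_isHomogeneous (L : Type*) [Field L] [IsAlgClosed L] [Algebra K L]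
    (hF : F.IsHomogeneous m) (hG : G.IsHomogeneous n) (hF₀ : F ≠ 0) (hm : 0 < m) (hn : 0 < n) :
    ∃ z : Fin 3 → L, z ≠ 0 ∧ aeval z F = 0 ∧ aeval z G = 0 := by
  by_contra! hnz
  have hvars : idealOfVars (Fin 3) K ≤ (Ideal.span {F, G}).radical := by
    rw [← vanishingIdeal_zeroLocus_eq_radical (K := L), zeroLocus_span, idealOfVars, Ideal.span_le]
    rintro _ ⟨i, rfl⟩ z hz
    suffices z = 0 by rw [this, aeval_X, Pi.zero_apply]
    by_contra hz₀
    exact hnz z hz₀ (hz F (Set.mem_insert _ _)) (hz G (Set.mem_insert_of_mem _ rfl))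
  obtain ⟨N, hN⟩ := Ideal.exists_pow_le_of_le_radical_of_fg hvars (idealOfVars_fg _ _)
  refine range_koszulMap_ne_top hF hG hF₀ hm hn N (eq_top_iff.2 fun H _ ↦ ?_)
  refine mem_range_koszulMap hF hG (hN ?_)
  rw [mem_pow_idealOfVars_iff']
  intro d hd
  exact H.2.coeff_eq_zero (by omega)

theorem isRelPrime_of_forall_aeval_eq_zero (L : Type*) [Field L] [IsAlgClosed L] [Algebra K L]
    {N : MvPolynomial (Fin 3) K} {k : ℕ} (hF : F.IsHomogeneous m) (hG : G.IsHomogeneous n)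
    (hN : N.IsHomogeneous k) (hN₀ : N ≠ 0) (hk : 0 < k)
    (hz : ∀ z : Fin 3 → L, aeval z N = 0 → aeval z F = 0 → aeval z G = 0 → z = 0) :
    IsRelPrime F G := by
  intro g hgF hgG
  by_contra hg
  have hvanish (z : Fin 3 → L) (hNz : aeval z N = 0)
      (hgz : aeval z (homogeneousComponent g.totalDegree g) = 0) : z = 0 := by
    have hdvd {H : MvPolynomial (Fin 3) K} {d : ℕ} (hH : H.IsHomogeneous d) (hgH : g ∣ H) :
        aeval z H = 0 :=
      zero_dvd_iff.1 (hgz ▸ map_dvd (aeval z) (homogeneousComponent_totalDegree_dvd hH hgH))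
    exact hz z hNz (hdvd hF hgF) (hdvd hG hgG)
  obtain rfl | hg₀ := eq_or_ne g 0
  · obtain ⟨z, hz₀, hNz, -⟩ := exists_common_zero_of_isHomogeneous L hN hN hN₀ hk hk
    exact hz₀ (hvanish z hNz (by rw [map_zero, map_zero]))
  · have hdeg : 0 < g.totalDegree := by
      refine Nat.pos_of_ne_zero fun h ↦ hg ?_
      obtain ⟨c, rfl⟩ : ∃ c, g = C c := ⟨_, totalDegree_eq_zero_iff_eq_C.1 h⟩
      exact (IsUnit.mk0 c (C_ne_zero.1 hg₀)).map C
    obtain ⟨z, hz₀, hNz, hgz⟩ := exists_common_zero_of_isHomogeneous L hN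
      (homogeneousComponent_isHomogeneous g.totalDegree g) hN₀ hk hdeg
    exact hz₀ (hvanish z hNz hgz)

end TernaryForms

end HomogeneousForms

section Tangency

open scoped RealInnerProductSpace

lemma lineThrough3_add_smul (a v : Pt3) (s : ℝ) :
    lineThrough3 (a + s • v) v = lineThrough3 a v := by
  ext x
  constructor
  · rintro ⟨t, rfl⟩
    exact ⟨s + t, by rw [add_smul, add_assoc]⟩
  · rintro ⟨t, rfl⟩
    exact ⟨t - s, by rw [add_assoc, ← add_smul, add_sub_cancel]⟩

lemma lineThrough3_smul (a v : Pt3) {s : ℝ} (hs : s ≠ 0) :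
    lineThrough3 a (s • v) = lineThrough3 a v := by
  ext x
  constructor
  · rintro ⟨t, rfl⟩
    exact ⟨t * s, by rw [mul_smul]⟩
  · rintro ⟨t, rfl⟩
    exact ⟨t * s⁻¹, by rw [smul_smul, inv_mul_cancel_right₀ hs]⟩

-- Reflecting a point of the line in the foot of the perpendicular from `c` keeps its distance
-- to `c`, so the tangency point is that foot.
lemma Tangent3.inner_sq_eq {a v c : Pt3} {r : ℝ} (hv : v ≠ 0)
    (h : Tangent3 (lineThrough3 a v) (Metric.sphere c r)) :
    ⟪a - c, v⟫ ^ 2 = ‖v‖ ^ 2 * (‖a - c‖ ^ 2 - r ^ 2) := by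
  obtain ⟨p, hp⟩ := h
  obtain ⟨⟨t, rfl⟩, hpr⟩ : p ∈ lineThrough3 a v ∩ Metric.sphere c r := hp ▸ rfl
  have hv' : ‖v‖ ≠ 0 := norm_ne_zero_iff.2 hv
  have hdist (s : ℝ) : ‖a + s • v - c‖ ^ 2 =
      ‖a - c‖ ^ 2 + 2 * s * ⟪a - c, v⟫ + s ^ 2 * ‖v‖ ^ 2 := by
    rw [add_sub_right_comm, norm_add_sq_real, inner_smul_right, norm_smul, mul_pow,
      Real.norm_eq_abs, sq_abs]
    ring
  obtain ⟨t', ht'⟩ : ∃ t', t' * ‖v‖ ^ 2 = -2 * ⟪a - c, v⟫ - t * ‖v‖ ^ 2 :=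
    ⟨(-2 * ⟪a - c, v⟫ - t * ‖v‖ ^ 2) / ‖v‖ ^ 2, div_mul_cancel₀ _ (pow_ne_zero 2 hv')⟩
  have hreflect : a + t' • v = a + t • v := by
    rw [← Set.mem_singleton_iff, ← hp]
    refine ⟨⟨t', rfl⟩, ?_⟩
    rw [← mem_sphere_iff_norm.1 hpr, mem_sphere_iff_norm,
      ← sq_eq_sq₀ (norm_nonneg _) (norm_nonneg _), hdist, hdist]
    linear_combination (t' - t) * ht'
  obtain rfl : t' = t := smul_left_injective ℝ hv (add_left_cancel hreflect)
  have hfoot : ⟪a - c, v⟫ = -t' * ‖v‖ ^ 2 := by linear_combination ht' / 2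
  have hr := hdist t'
  rw [mem_sphere_iff_norm.1 hpr, hfoot] at hr
  rw [hfoot, hr]
  ring

/-- The lines tangent to all spheres of the family with centers `c i` and radii `r i`. -/
def commonTangents {ι : Type*} (c : ι → Pt3) (r : ι → ℝ) : Set (Set Pt3) :=
  {l | IsLine3 l ∧ ∀ i, Tangent3 l (Metric.sphere (c i) (r i))}

lemma commonTangents_comp_equiv {ι κ : Type*} (e : κ ≃ ι) (c : ι → Pt3) (r : ι → ℝ) :
    commonTangents (c ∘ e) (r ∘ e) = commonTangents c r := by
  ext l
  exact and_congr_right fun _ ↦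
    e.forall_congr_right (q := fun i ↦ Tangent3 l (Metric.sphere (c i) (r i)))

lemma injective_of_commonTangents_nonempty {ι : Type*} {c : ι → Pt3} {r : ι → ℝ}
    (hr : ∀ i, 0 < r i) (hsphere : Function.Injective fun i ↦ Metric.sphere (c i) (r i))
    (hne : (commonTangents c r).Nonempty) : Function.Injective c := by
  obtain ⟨_, ⟨a, v, hv, rfl⟩, htan⟩ := hne
  intro i j hij
  have hi := (htan i).inner_sq_eq hv
  rw [hij, (htan j).inner_sq_eq hv, mul_right_inj' (by simpa using hv), sub_right_inj,
    sq_eq_sq₀ (hr j).le (hr i).le] at hi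
  exact hsphere (by simp only [hij, hi])

/-- `p` and `v` are the foot of the perpendicular from the origin and a direction of a line which is
tangent to the sphere of squared radius `R` about the origin and to the spheres about the points
`d i` with squared radii `R + ‖d i‖ ^ 2 - K i`. -/
structure IsTangentFoot {ι : Type*} (d : ι → Pt3) (K : ι → ℝ) (R : ℝ) (p v : Pt3) : Prop where
  ne_zero : v ≠ 0
  inner_eq_zero : ⟪p, v⟫ = 0
  norm_sq : ‖p‖ ^ 2 = R
  two_mul_inner (i : ι) : 2 * ‖v‖ ^ 2 * ⟪d i, p⟫ = K i * ‖v‖ ^ 2 - ⟪d i, v⟫ ^ 2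

lemma IsTangentFoot.smul {ι : Type*} {d : ι → Pt3} {K : ι → ℝ} {R : ℝ} {p v : Pt3}
    (h : IsTangentFoot d K R p v) {s : ℝ} (hs : s ≠ 0) : IsTangentFoot d K R p (s • v) where
  ne_zero := smul_ne_zero hs h.ne_zero
  inner_eq_zero := by rw [inner_smul_right, h.inner_eq_zero, mul_zero]
  norm_sq := h.norm_sq
  two_mul_inner i := by
    rw [norm_smul, mul_pow, Real.norm_eq_abs, sq_abs, inner_smul_right]
    linear_combination s ^ 2 * h.two_mul_inner i

/-- The lines whose foot and direction, relative to the origin `a`, satisfy `IsTangentFoot`. -/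
def tangentFootLines {ι : Type*} (a : Pt3) (d : ι → Pt3) (K : ι → ℝ) (R : ℝ) : Set (Set Pt3) :=
  {l | ∃ p v, IsTangentFoot d K R p v ∧ l = lineThrough3 (a + p) v}

lemma commonTangents_subset_tangentFootLines {ι κ : Type*} (c : ι → Pt3) (r : ι → ℝ)
    (o : ι) (f : κ → ι) :
    commonTangents c r ⊆ tangentFootLines (c o) (fun i ↦ c (f i) - c o)
      (fun i ↦ r o ^ 2 + ‖c (f i) - c o‖ ^ 2 - r (f i) ^ 2) (r o ^ 2) := by
  rintro _ ⟨⟨a, v, hv, rfl⟩, htan⟩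
  have hv' : ‖v‖ ≠ 0 := norm_ne_zero_iff.2 hv
  obtain ⟨s, hs⟩ : ∃ s : ℝ, ⟪a + s • v - c o, v⟫ = 0 := by
    refine ⟨-⟪a - c o, v⟫ / ‖v‖ ^ 2, ?_⟩
    rw [add_sub_right_comm, inner_add_left, real_inner_smul_left, real_inner_self_eq_norm_sq]
    field_simp
    ring
  obtain ⟨p, hp⟩ : ∃ p, a + s • v = c o + p := ⟨a + s • v - c o, by abel⟩
  rw [← lineThrough3_add_smul a v s, hp] at htan ⊢
  rw [hp, add_sub_cancel_left] at hs
  have htangent (i : ι) := (htan i).inner_sq_eq hv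
  have hR : ‖p‖ ^ 2 = r o ^ 2 := by
    have h := htangent o
    rw [add_sub_cancel_left, hs, zero_pow two_ne_zero, zero_eq_mul] at h
    exact sub_eq_zero.1 (h.resolve_left (pow_ne_zero 2 hv'))
  refine ⟨p, v, ⟨hv, hs, hR, fun i ↦ ?_⟩, rfl⟩
  have h := htangent (f i)
  rw [show c o + p - c (f i) = p - (c (f i) - c o) by abel, inner_sub_left, hs, norm_sub_sq_real,
    hR, real_inner_comm _ p] at h
  linear_combination h

end Tangency

section DualBasis

open scoped RealInnerProductSpace
open Module

variable {ι E : Type*} [Fintype ι] [NormedAddCommGroup E] [InnerProductSpace ℝ E]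

lemma exists_basis_sum_inner_smul (b : Basis ι ℝ E) :
    ∃ e : Basis ι ℝ E, ∀ v, ∑ i, ⟪b i, v⟫ • e i = v := by
  let φ : E →ₗ[ℝ] ι → ℝ := LinearMap.pi fun i ↦ innerₗ E (b i)
  have hφ : Function.Injective φ := fun u v h ↦
    InnerProductSpace.ext_inner_left_basis b fun i ↦ congrFun h i
  have : FiniteDimensional ℝ E := b.finiteDimensional_of_finite
  let e := Basis.ofEquivFun (φ.linearEquivOfInjective hφ
    (by rw [finrank_fintype_fun_eq_card, finrank_eq_card_basis b]))
  exact ⟨e, fun v ↦ e.sum_equivFun v⟩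

end DualBasis

section GramForm

variable {ι S T : Type*} [CommRing S] [Algebra ℝ S] [CommRing T] [Algebra ℝ T]

/-- For `t = ‖v‖ ^ 2` and `x i = ⟪d i, v⟫`, the values `2 * t * ⟪d i, p⟫` at a foot `p` of the
line. -/
def footQuad (K : ι → ℝ) (x : ι → S) (t : S) : ι → S :=
  t • (algebraMap ℝ S ∘ K) - x ^ 2

lemma map_footQuad (K : ι → ℝ) (φ : S →ₐ[ℝ] T) (x : ι → S) (t : S) :
    φ ∘ footQuad K x t = footQuad K (φ ∘ x) (φ t) := by
  ext i
  simp only [footQuad, Function.comp_apply, Pi.sub_apply, Pi.smul_apply, Pi.pow_apply, smul_eq_mul,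
    map_sub, map_mul, map_pow, AlgHom.commutes]

lemma isHomogeneous_footQuad {σ : Type*} (K : ι → ℝ) {x : ι → MvPolynomial σ ℝ}
    {t : MvPolynomial σ ℝ} {m : ℕ} (hx : ∀ i, (x i).IsHomogeneous m) (ht : t.IsHomogeneous (m * 2))
    (i : ι) :
    (footQuad K x t i).IsHomogeneous (m * 2) := by
  refine .sub ?_ ((hx i).pow 2)
  simpa using ht.mul (MvPolynomial.isHomogeneous_C σ (K i))

variable [Fintype ι] [DecidableEq ι] (H : Matrix ι ι ℝ)

/-- The bilinear form with real matrix `H` over an `ℝ`-algebra `S`. Leaving `S` free lets one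
formula serve for points over `ℝ` and `ℂ` and for the polynomials that they are zeros of. -/
def gramForm (S : Type*) [CommRing S] [Algebra ℝ S] : LinearMap.BilinForm S (ι → S) :=
  (H.map (algebraMap ℝ S)).toBilin'

lemma gramForm_apply (x y : ι → S) :
    gramForm H S x y = ∑ i, ∑ j, x i * algebraMap ℝ S (H i j) * y j :=
  Matrix.toBilin'_apply _ x y

lemma map_gramForm (φ : S →ₐ[ℝ] T) (x y : ι → S) :
    φ (gramForm H S x y) = gramForm H T (φ ∘ x) (φ ∘ y) := by
  simp only [gramForm_apply, map_sum, map_mul, AlgHom.commutes, Function.comp_apply]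

lemma isHomogeneous_gramForm {σ : Type*} {x y : ι → MvPolynomial σ ℝ} {m n : ℕ}
    (hx : ∀ i, (x i).IsHomogeneous m) (hy : ∀ i, (y i).IsHomogeneous n) :
    (gramForm H (MvPolynomial σ ℝ) x y).IsHomogeneous (m + n) := by
  rw [gramForm_apply]
  refine .sum _ _ _ fun i _ ↦ .sum _ _ _ fun j _ ↦ .mul ?_ (hy j)
  exact (hx i).mul (MvPolynomial.isHomogeneous_C σ (H i j))

variable {H}

lemma gramForm_comm (hH : H.IsHermitian) (x y : ι → S) : gramForm H S x y = gramForm H S y x := by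
  have hsymm (i j : ι) : H i j = H j i := by simpa using hH.apply j i
  rw [gramForm_apply, gramForm_apply, Finset.sum_comm]
  refine Finset.sum_congr rfl fun i _ ↦ Finset.sum_congr rfl fun j _ ↦ ?_
  rw [hsymm]
  ring

lemma gramForm_self_pos (hH : H.PosDef) {x : ι → ℝ} (hx : x ≠ 0) : 0 < gramForm H ℝ x x := by
  simpa [gramForm, Matrix.toBilin'_apply', Matrix.dotProduct_mulVec] using
    hH.dotProduct_mulVec_pos hx

lemma gramForm_nondegenerate (hH : H.det ≠ 0) (K : Type*) [Field K] [Algebra ℝ K] :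
    (gramForm H K).Nondegenerate := by
  refine LinearMap.BilinForm.nondegenerate_toBilin'_of_det_ne_zero' _ ?_
  rw [← RingHom.mapMatrix_apply, ← RingHom.map_det]
  exact (map_ne_zero _).2 hH

lemma inner_sum_smul_sum_smul_eq_gramForm {E : Type*} [NormedAddCommGroup E] [InnerProductSpace ℝ E]
    (e : ι → E) (x y : ι → ℝ) :
    inner ℝ (∑ i, x i • e i) (∑ i, y i • e i) = gramForm (Matrix.gram ℝ e) ℝ x y := by
  simp_rw [gramForm_apply, sum_inner, inner_sum, real_inner_smul_left, real_inner_smul_right,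
    Matrix.gram_apply, Algebra.algebraMap_self, RingHom.id_apply]
  refine Finset.sum_congr rfl fun i _ ↦ Finset.sum_congr rfl fun j _ ↦ ?_
  ring

end GramForm

section Isotropic

open Module

lemma not_linearIndependent_pair_of_isotropic {K V : Type*} [Field K] [AddCommGroup V] [Module K V]
    [FiniteDimensional K V] (hV : finrank K V < 4) {B : LinearMap.BilinForm K V}
    (hB : B.Nondegenerate) {x y : V}
    (hxx : B x x = 0) (hxy : B x y = 0) (hyx : B y x = 0) (hyy : B y y = 0) :
    ¬ LinearIndependent K ![x, y] := by
  intro hli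
  have hspan : finrank K (Submodule.span K {x, y}) = 2 := by
    rw [← Matrix.range_cons_cons_empty, finrank_span_eq_card hli, Fintype.card_fin]
  have hle : Submodule.span K {x, y} ≤ B.orthogonal (Submodule.span K {x, y}) := by
    rw [Submodule.span_le]
    intro u hu w hw
    obtain ⟨a, b, rfl⟩ := Submodule.mem_span_pair.1 hw
    rcases hu with rfl | rfl <;> simp [*]
  have := LinearMap.BilinForm.finrank_orthogonal hB (Submodule.span K {x, y})
  have := Submodule.finrank_mono hle
  omega

-- The span of `x` and `x ^ 2` is totally isotropic, hence a line; so `x` is a multiple of a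
-- vector of zeros and ones, and such vectors are real.
lemma eq_zero_of_gramForm_sq_eq_zero {H : Matrix (Fin 3) (Fin 3) ℝ} (hH : H.PosDef) {x : Fin 3 → ℂ}
    (h₁ : gramForm H ℂ x x = 0) (h₂ : gramForm H ℂ (x ^ 2) x = 0)
    (h₃ : gramForm H ℂ (x ^ 2) (x ^ 2) = 0) : x = 0 := by
  by_contra hx
  have hdep := not_linearIndependent_pair_of_isotropic (by simp)
    (gramForm_nondegenerate hH.det_pos.ne' ℂ) h₁
    ((gramForm_comm hH.isHermitian x (x ^ 2)).trans h₂) h₂ h₃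
  rw [LinearIndependent.pair_iff' hx] at hdep
  push Not at hdep
  obtain ⟨c, hc⟩ := hdep
  let ε : Fin 3 → ℝ := fun i ↦ if x i = 0 then 0 else 1
  have hxε : x = c • (algebraMap ℝ ℂ ∘ ε) := by
    ext i
    by_cases hi : x i = 0
    · simp [ε, hi]
    · have := congrFun hc i
      simp only [Pi.smul_apply, smul_eq_mul, Pi.pow_apply, sq] at this
      simp [ε, hi, mul_right_cancel₀ hi this]
  have hε : ε ≠ 0 := by
    rintro hε
    exact hx (by rw [hxε, hε]; ext; simp)
  have hc₀ : c ≠ 0 := by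
    rintro rfl
    exact hx (by rw [hxε, zero_smul])
  rw [hxε, LinearMap.BilinForm.smul_left, LinearMap.BilinForm.smul_right,
    mul_eq_zero_iff_left hc₀, mul_eq_zero_iff_left hc₀] at h₁
  have hreal := map_gramForm H (Algebra.ofId ℝ ℂ) ε ε
  exact (gramForm_self_pos hH hε).ne' ((algebraMap ℝ ℂ).injective
    (hreal.trans (h₁.trans (map_zero (algebraMap ℝ ℂ)).symm)))

end Isotropic

section FootEquations

variable {ι S T : Type*} [Fintype ι] [DecidableEq ι] (H : Matrix ι ι ℝ) (K : ι → ℝ) (R : ℝ)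
  [CommRing S] [Algebra ℝ S] [CommRing T] [Algebra ℝ T]

/-- For vectors `p`, `v` in the span of a frame with Gram matrix `H`, this is `2 * t * ⟪p, v⟫` at a
tangent foot with `t = ‖v‖ ^ 2`. -/
def footInner (x : ι → S) (t : S) : S :=
  gramForm H S (footQuad K x t) x

/-- For vectors `p`, `v` in the span of a frame with Gram matrix `H`, this is
`4 * t ^ 2 * (‖p‖ ^ 2 - R)` at a tangent foot with `t = ‖v‖ ^ 2`. -/
def footSphere (x : ι → S) (t : S) : S :=
  gramForm H S (footQuad K x t) (footQuad K x t) - algebraMap ℝ S (4 * R) * t ^ 2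

lemma map_footInner (φ : S →ₐ[ℝ] T) (x : ι → S) (t : S) :
    φ (footInner H K x t) = footInner H K (φ ∘ x) (φ t) := by
  rw [footInner, map_gramForm, map_footQuad, footInner]

lemma map_footSphere (φ : S →ₐ[ℝ] T) (x : ι → S) (t : S) :
    φ (footSphere H K R x t) = footSphere H K R (φ ∘ x) (φ t) := by
  rw [footSphere, map_sub, map_gramForm, map_footQuad, map_mul, map_pow, AlgHom.commutes,
    footSphere]

variable {σ : Type*} {x : ι → MvPolynomial σ ℝ} {t : MvPolynomial σ ℝ} {m : ℕ}

lemma isHomogeneous_footInner (hx : ∀ i, (x i).IsHomogeneous m) (ht : t.IsHomogeneous (m * 2)) :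
    (footInner H K x t).IsHomogeneous (m * 2 + m) :=
  isHomogeneous_gramForm H (isHomogeneous_footQuad K hx ht) hx

lemma isHomogeneous_footSphere (hx : ∀ i, (x i).IsHomogeneous m) (ht : t.IsHomogeneous (m * 2)) :
    (footSphere H K R x t).IsHomogeneous (m * 2 + m * 2) := by
  have hφ := isHomogeneous_footQuad K hx ht
  refine (isHomogeneous_gramForm H hφ hφ).sub ?_
  simpa [mul_two] using (MvPolynomial.isHomogeneous_C σ (4 * R)).mul (ht.pow 2)

end FootEquations

section TangentFoot

open scoped RealInnerProductSpace LinearAlgebra.Projectivization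

variable {ι κ : Type*} {d : ι → Pt3} {K : ι → ℝ} {R : ℝ} {p v : Pt3}

lemma IsTangentFoot.comp (h : IsTangentFoot d K R p v) (f : κ → ι) :
    IsTangentFoot (d ∘ f) (K ∘ f) R p v where
  ne_zero := h.ne_zero
  inner_eq_zero := h.inner_eq_zero
  norm_sq := h.norm_sq
  two_mul_inner i := h.two_mul_inner (f i)

lemma IsTangentFoot.footQuad_eq (h : IsTangentFoot d K R p v) :
    footQuad K (fun i ↦ ⟪d i, v⟫) (‖v‖ ^ 2) = (2 * ‖v‖ ^ 2) • fun i ↦ ⟪d i, p⟫ := by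
  ext i
  simp only [footQuad, Algebra.algebraMap_self, RingHom.coe_id, Pi.sub_apply, Pi.smul_apply,
    Pi.pow_apply, Function.comp_apply, id_eq, smul_eq_mul]
  linear_combination -h.two_mul_inner i

lemma exists_smul_inner_eq_rep (d : ι → Pt3) {v : Pt3} (hx : (fun i ↦ ⟪d i, v⟫) ≠ 0) :
    ∃ (P : ℙ ℝ (ι → ℝ)) (s : ℝ), s ≠ 0 ∧ (fun i ↦ ⟪d i, s • v⟫) = P.rep := by
  obtain ⟨s, hs⟩ := Projectivization.exists_smul_eq_mk_rep ℝ _ hx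
  refine ⟨.mk ℝ _ hx, s, s.ne_zero, ?_⟩
  rw [← hs]
  ext i
  rw [real_inner_smul_right]
  rfl

variable [Fintype ι] [DecidableEq ι]

lemma IsTangentFoot.footInner_eq (h : IsTangentFoot d K R p v) (H : Matrix ι ι ℝ) :
    footInner H K (fun i ↦ ⟪d i, v⟫) (‖v‖ ^ 2) =
      2 * ‖v‖ ^ 2 * gramForm H ℝ (fun i ↦ ⟪d i, p⟫) (fun i ↦ ⟪d i, v⟫) := by
  rw [footInner, h.footQuad_eq, LinearMap.map_smul₂, smul_eq_mul]

lemma IsTangentFoot.footSphere_eq (h : IsTangentFoot d K R p v) (H : Matrix ι ι ℝ) :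
    footSphere H K R (fun i ↦ ⟪d i, v⟫) (‖v‖ ^ 2) =
      4 * ‖v‖ ^ 4 * (gramForm H ℝ (fun i ↦ ⟪d i, p⟫) (fun i ↦ ⟪d i, p⟫) - R) := by
  rw [footSphere, h.footQuad_eq, LinearMap.map_smul₂, map_smul, smul_eq_mul, smul_eq_mul,
    Algebra.algebraMap_self, RingHom.id_apply]
  ring

end TangentFoot

section SpatialFrame

open Module MvPolynomial
open scoped RealInnerProductSpace LinearAlgebra.Projectivization

/-- The cubic equation which `⟪p, v⟫ = 0` imposes on the direction `v` of a common tangent. -/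
def footCubic (H : Matrix (Fin 3) (Fin 3) ℝ) (K : Fin 3 → ℝ) : MvPolynomial (Fin 3) ℝ :=
  footInner H K X (gramForm H _ X X)

/-- The quartic equation which `‖p‖ ^ 2 = R` imposes on the direction `v` of a common tangent. -/
def footQuartic (H : Matrix (Fin 3) (Fin 3) ℝ) (K : Fin 3 → ℝ) (R : ℝ) : MvPolynomial (Fin 3) ℝ :=
  footSphere H K R X (gramForm H _ X X)

lemma isHomogeneous_footCubic (H : Matrix (Fin 3) (Fin 3) ℝ) (K : Fin 3 → ℝ) :
    (footCubic H K).IsHomogeneous 3 :=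
  isHomogeneous_footInner H K (isHomogeneous_X ℝ)
    (isHomogeneous_gramForm H (isHomogeneous_X ℝ) (isHomogeneous_X ℝ))

lemma isHomogeneous_footQuartic (H : Matrix (Fin 3) (Fin 3) ℝ) (K : Fin 3 → ℝ) (R : ℝ) :
    (footQuartic H K R).IsHomogeneous 4 :=
  isHomogeneous_footSphere H K R (isHomogeneous_X ℝ)
    (isHomogeneous_gramForm H (isHomogeneous_X ℝ) (isHomogeneous_X ℝ))

section Evaluation

variable {L : Type*} [Field L] [Algebra ℝ L] (z : Fin 3 → L)

lemma aeval_comp_X : aeval z ∘ (X : Fin 3 → MvPolynomial (Fin 3) ℝ) = z :=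
  funext (aeval_X z)

lemma aeval_gramForm_X (H : Matrix (Fin 3) (Fin 3) ℝ) :
    aeval z (gramForm H (MvPolynomial (Fin 3) ℝ) X X) = gramForm H L z z := by
  rw [map_gramForm, aeval_comp_X]

lemma aeval_footCubic (H : Matrix (Fin 3) (Fin 3) ℝ) (K : Fin 3 → ℝ) :
    aeval z (footCubic H K) = footInner H K z (gramForm H L z z) := by
  rw [footCubic, map_footInner, aeval_gramForm_X, aeval_comp_X]

lemma aeval_footQuartic (H : Matrix (Fin 3) (Fin 3) ℝ) (K : Fin 3 → ℝ) (R : ℝ) :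
    aeval z (footQuartic H K R) = footSphere H K R z (gramForm H L z z) := by
  rw [footQuartic, map_footSphere, aeval_gramForm_X, aeval_comp_X]

end Evaluation

lemma isRelPrime_footCubic_footQuartic {H : Matrix (Fin 3) (Fin 3) ℝ} (hH : H.PosDef)
    (K : Fin 3 → ℝ) (R : ℝ) : IsRelPrime (footCubic H K) (footQuartic H K R) := by
  have hN₀ : gramForm H (MvPolynomial (Fin 3) ℝ) X X ≠ 0 := fun h ↦ by
    have hpos := gramForm_self_pos hH (one_ne_zero (α := Fin 3 → ℝ))
    rw [← aeval_gramForm_X, h, map_zero] at hpos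
    exact hpos.false
  refine isRelPrime_of_forall_aeval_eq_zero ℂ (isHomogeneous_footCubic H K)
    (isHomogeneous_footQuartic H K R)
    (isHomogeneous_gramForm H (isHomogeneous_X ℝ) (isHomogeneous_X ℝ)) hN₀ two_pos
    fun z hz hcubic hquartic ↦ ?_
  rw [aeval_gramForm_X] at hz
  refine eq_zero_of_gramForm_sq_eq_zero hH hz ?_ ?_
  · simpa [aeval_footCubic, hz, footInner, footQuad] using hcubic
  · simpa [aeval_footQuartic, hz, footSphere, footQuad] using hquartic

section Frame

variable {d e : Fin 3 → Pt3} {K : Fin 3 → ℝ} {R : ℝ} {p v : Pt3}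

lemma inner_eq_gramForm (he : ∀ v, ∑ i, ⟪d i, v⟫ • e i = v) (u w : Pt3) :
    ⟪u, w⟫ = gramForm (Matrix.gram ℝ e) ℝ (fun i ↦ ⟪d i, u⟫) (fun i ↦ ⟪d i, w⟫) := by
  rw [← inner_sum_smul_sum_smul_eq_gramForm, he, he]

lemma IsTangentFoot.eval_footCubic_eq_zero (he : ∀ v, ∑ i, ⟪d i, v⟫ • e i = v)
    (h : IsTangentFoot d K R p v) :
    eval (fun i ↦ ⟪d i, v⟫) (footCubic (Matrix.gram ℝ e) K) = 0 := by
  rw [← MvPolynomial.coe_aeval_eq_eval, RingHom.coe_coe, aeval_footCubic, ← inner_eq_gramForm he,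
    real_inner_self_eq_norm_sq, h.footInner_eq, ← inner_eq_gramForm he, h.inner_eq_zero, mul_zero]

lemma IsTangentFoot.eval_footQuartic_eq_zero (he : ∀ v, ∑ i, ⟪d i, v⟫ • e i = v)
    (h : IsTangentFoot d K R p v) :
    eval (fun i ↦ ⟪d i, v⟫) (footQuartic (Matrix.gram ℝ e) K R) = 0 := by
  rw [← MvPolynomial.coe_aeval_eq_eval, RingHom.coe_coe, aeval_footQuartic, ← inner_eq_gramForm he,
    real_inner_self_eq_norm_sq, h.footSphere_eq, ← inner_eq_gramForm he,
    real_inner_self_eq_norm_sq, h.norm_sq, sub_self, mul_zero]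

lemma IsTangentFoot.eq_inv_smul_sum_footQuad (he : ∀ v, ∑ i, ⟪d i, v⟫ • e i = v)
    (h : IsTangentFoot d K R p v) :
    p = (2 * ‖v‖ ^ 2)⁻¹ • ∑ i, footQuad K (fun i ↦ ⟪d i, v⟫) (‖v‖ ^ 2) i • e i := by
  have hv : 2 * ‖v‖ ^ 2 ≠ 0 := by simpa using h.ne_zero
  simp only [h.footQuad_eq, Pi.smul_apply, smul_assoc, ← Finset.smul_sum, he, inv_smul_smul₀ hv]

end Frame

theorem encard_tangentFootLines_le_of_basis (a : Pt3) (d : Basis (Fin 3) ℝ Pt3) (K : Fin 3 → ℝ)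
    (R : ℝ) : (tangentFootLines a d K R).encard ≤ 12 := by
  obtain ⟨e, he⟩ := exists_basis_sum_inner_smul d
  let H := Matrix.gram ℝ e
  let Z := {P : ℙ ℝ (Fin 3 → ℝ) |
    eval P.rep (footCubic H K) = 0 ∧ eval P.rep (footQuartic H K R) = 0}
  let line : ℙ ℝ (Fin 3 → ℝ) → Set Pt3 := fun P ↦
    lineThrough3 (a + (2 * gramForm H ℝ P.rep P.rep)⁻¹ •
      ∑ i, footQuad K P.rep (gramForm H ℝ P.rep P.rep) i • e i) (∑ i, P.rep i • e i)
  have hcover : tangentFootLines a d K R ⊆ line '' Z := by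
    rintro _ ⟨p, v, h, rfl⟩
    have hx : (fun i ↦ ⟪d i, v⟫) ≠ 0 := fun h₀ ↦ h.ne_zero <| by
      rw [← he v, Finset.sum_eq_zero fun i _ ↦ by rw [congrFun h₀ i, Pi.zero_apply, zero_smul]]
    obtain ⟨P, s, hs, hP⟩ := exists_smul_inner_eq_rep d hx
    rw [← lineThrough3_smul _ v hs]
    replace h := h.smul hs
    refine ⟨P, ⟨hP ▸ h.eval_footCubic_eq_zero he, hP ▸ h.eval_footQuartic_eq_zero he⟩, ?_⟩
    simp only [line, ← hP, he]
    rw [← inner_eq_gramForm he, real_inner_self_eq_norm_sq, ← h.eq_inv_smul_sum_footQuad he]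
  calc (tangentFootLines a d K R).encard ≤ Z.encard :=
      (Set.encard_mono hcover).trans (Set.encard_image_le line Z)
    _ ≤ (3 * 4 : ℕ) := encard_commonZeros_le_of_isRelPrime (isHomogeneous_footCubic H K)
      (isHomogeneous_footQuartic H K R) (isRelPrime_footCubic_footQuartic
        (Matrix.posDef_gram_of_linearIndependent e.linearIndependent) K R)

end SpatialFrame

section Eliminant

open Polynomial

variable {S T : Type*} [CommRing S] [Algebra ℝ S] [CommRing T] [Algebra ℝ T]
  {H : Matrix (Fin 2) (Fin 2) ℝ} {K : Fin 2 → ℝ} {R : ℝ}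

/-- If `z` and `Z` are the components of `v` and `p` normal to a plane and `x` encodes the in-plane
component of `v`, then `t - ‖x‖ ^ 2 = z ^ 2`, whereas `footInner` and `footSphere` equal
`-2 * t * z * Z` and `-(2 * t * Z) ^ 2`; this is the relation obtained by eliminating `z` and
`Z`. -/
def footEliminant (H : Matrix (Fin 2) (Fin 2) ℝ) (K : Fin 2 → ℝ) (R : ℝ) (x : Fin 2 → S) (t : S) :
    S :=
  footInner H K x t ^ 2 + (t - gramForm H S x x) * footSphere H K R x t

lemma map_footEliminant (φ : S →ₐ[ℝ] T) (x : Fin 2 → S) (t : S) :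
    φ (footEliminant H K R x t) = footEliminant H K R (φ ∘ x) (φ t) := by
  simp only [footEliminant, map_add, map_mul, map_pow, map_sub, map_footInner, map_footSphere,
    map_gramForm]

lemma isHomogeneous_footEliminant {σ : Type*} {x : Fin 2 → MvPolynomial σ ℝ} {t : MvPolynomial σ ℝ}
    {m : ℕ} (hx : ∀ i, (x i).IsHomogeneous m) (ht : t.IsHomogeneous (m * 2)) :
    (footEliminant H K R x t).IsHomogeneous (m * 6) := by
  have hI := (isHomogeneous_footInner H K hx ht).pow 2
  have hN := isHomogeneous_gramForm H hx hx
  rw [← mul_two] at hN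
  have hS := (ht.sub hN).mul
    (isHomogeneous_footSphere H K R hx ht)
  rw [show (m * 2 + m) * 2 = m * 6 by ring] at hI
  rw [show m * 2 + (m * 2 + m * 2) = m * 6 by ring] at hS
  exact hI.add hS

lemma gramForm_sq_sub_mul (hH : H.IsHermitian) (x y : Fin 2 → S) :
    gramForm H S x y ^ 2 - gramForm H S y y * gramForm H S x x =
      -algebraMap ℝ S H.det * (x 0 * y 1 - x 1 * y 0) ^ 2 := by
  have hsymm : H 1 0 = H 0 1 := by simpa using hH.apply 0 1
  simp only [gramForm_apply, Fin.sum_univ_two, Matrix.det_fin_two, hsymm, map_sub, map_mul]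
  ring

lemma footEliminant_eq (hH : H.IsHermitian) (x : Fin 2 → S) (t : S) :
    footEliminant H K R x t =
      t * (gramForm H S (footQuad K x t) (footQuad K x t) -
        algebraMap ℝ S (4 * R) * t * (t - gramForm H S x x)) -
      algebraMap ℝ S H.det * (footQuad K x t 0 * x 1 - footQuad K x t 1 * x 0) ^ 2 := by
  have h := gramForm_sq_sub_mul hH (footQuad K x t) x
  rw [footEliminant, footInner, footSphere]
  linear_combination h

lemma footEliminant_zero (hH : H.IsHermitian) (x : Fin 2 → S) :
    footEliminant H K R x 0 = -algebraMap ℝ S H.det * (x 0 * x 1 * (x 0 - x 1)) ^ 2 := by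
  rw [footEliminant_eq hH]
  simp only [footQuad, zero_smul, zero_sub, Pi.neg_apply, Pi.pow_apply]
  ring

-- Along the curve `(x, X * τ)` the eliminant is `X * (τ * gramForm H (x ^ 2) (x ^ 2) + X * _)`.
lemma eval_zero_eq_zero_of_footEliminant_eq_zero (hH : H.PosDef) {x : Fin 2 → ℝ[X]} {τ b : ℝ[X]}
    (hx : x 0 * x 1 * (x 0 - x 1) = X * b) (hx₀ : (fun i ↦ (x i).eval 0) ≠ 0)
    (h : footEliminant H K R x (X * τ) = 0) : τ.eval 0 = 0 := by
  let φ := footQuad K x (X * τ)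
  have hφ : φ 0 * x 1 - φ 1 * x 0 = X * (τ * (C (K 0) * x 1 - C (K 1) * x 0) - b) := by
    simp only [φ, footQuad, Pi.sub_apply, Pi.smul_apply, Pi.pow_apply, Function.comp_apply,
      smul_eq_mul, Polynomial.algebraMap_eq]
    linear_combination -hx
  rw [footEliminant_eq hH.isHermitian, show footQuad K x (X * τ) = φ from rfl, hφ] at h
  have hdiv : τ * (gramForm H ℝ[X] φ φ -
      algebraMap ℝ ℝ[X] (4 * R) * (X * τ) * (X * τ - gramForm H ℝ[X] x x)) -
      X * (algebraMap ℝ ℝ[X] H.det * (τ * (C (K 0) * x 1 - C (K 1) * x 0) - b) ^ 2) = 0 :=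
    mul_left_cancel₀ X_ne_zero (by linear_combination h)
  have hφ₀ : eval 0 ∘ φ ≠ 0 := fun hzero ↦
    hx₀ (funext fun i ↦ by simpa [φ, footQuad] using congrFun hzero i)
  have h₀ := congrArg (aeval (0 : ℝ)) hdiv
  simp only [map_sub, map_mul, map_gramForm, aeval_X, zero_mul, mul_zero, sub_zero, map_zero,
    mul_eq_zero, coe_aeval_eq_eval] at h₀
  exact h₀.resolve_right (gramForm_self_pos hH hφ₀).ne'

lemma exists_footEliminant_tangent_curve_eq (hH : H.IsHermitian) (c : ℝ) :
    ∃ c₃ c₄, footEliminant H K R ![1, X] (C c * X ^ 2) = X ^ 2 *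
      (C c₄ * X ^ 4 + C c₃ * X ^ 3 +
        C (c * (4 * R * c * H 0 0 - 2 * K 0 * c * H 0 0 - (H 0 1 + H 1 0) * (K 1 * c - 1)) -
          H.det * ((K 1 * c - 1) ^ 2 - 2 * K 0 * c)) * X ^ 2 +
        C (-2 * H.det * (K 1 * c - 1)) * X + C (c * H 0 0 - H.det)) := by
  refine ⟨4 * R * c ^ 2 * (H 0 1 + H 1 0) + 2 * H.det * (K 0 * c) * (K 1 * c - 1),
    c * (H 0 0 * (K 0 * c) ^ 2 + (H 0 1 + H 1 0) * (K 0 * c) * (K 1 * c - 1) +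
      H 1 1 * (K 1 * c - 1) ^ 2 - 4 * R * c * (c - H 1 1)) - H.det * (K 0 * c) ^ 2, ?_⟩
  rw [footEliminant_eq hH]
  simp only [gramForm_apply, footQuad, Fin.sum_univ_two, Pi.sub_apply, Pi.smul_apply, Pi.pow_apply,
    Function.comp_apply, smul_eq_mul, algebraMap_eq, Matrix.cons_val_zero, Matrix.cons_val_one,
    C_add, C_sub, C_mul, C_pow, C_neg, map_ofNat, C_1]
  ring

-- The two lowest coefficients force `c * H 0 0 = det H` and `c * K 1 = 1`, and then the third one
-- is `4 * R * c ^ 2 * H 0 0`.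
lemma footEliminant_tangent_curve_ne_zero (hH : H.PosDef) (hR : R ≠ 0) {c : ℝ} (hc : c ≠ 0) :
    footEliminant H K R ![1, X] (C c * X ^ 2) ≠ 0 := by
  intro h
  obtain ⟨c₃, c₄, hexp⟩ := exists_footEliminant_tangent_curve_eq (K := K) (R := R) hH.isHermitian c
  have hpoly := (mul_eq_zero.1 (hexp.symm.trans h)).resolve_left (pow_ne_zero 2 X_ne_zero)
  have hcoeff (i : ℕ) := congrArg (coeff · i) hpoly
  simp only [coeff_add, coeff_C_mul, coeff_X_pow, coeff_X, coeff_C, coeff_zero] at hcoeff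
  have hdet : c * H 0 0 - H.det = 0 := by
    simpa using hcoeff 0
  have hK : K 1 * c - 1 = 0 := by
    simpa [hH.det_pos.ne'] using hcoeff 1
  have hH₀₀ : 4 * R * c ^ 2 * H 0 0 = 0 := by
    have h₂ : c * (4 * R * c * H 0 0 - 2 * K 0 * c * H 0 0) + H.det * (2 * K 0 * c) = 0 := by
      simpa [hK] using hcoeff 2
    linear_combination h₂ + 2 * K 0 * c * hdet
  simp [hR, hc, hH.diag_pos.ne'] at hH₀₀

/-- Pairing `v` with `d 2 = a • d 0 + b • d 1`, where `x i = ⟪d i, v⟫`, turns the three equations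
`2 * t * ⟪d i, p⟫ = K i * t - ⟪d i, v⟫ ^ 2` into
`(K 2 - a * K 0 - b * K 1) * t = coplanarQuad a b x`. -/
def coplanarQuad (a b : ℝ) (x : Fin 2 → S) : S :=
  (algebraMap ℝ S a * x 0 + algebraMap ℝ S b * x 1) ^ 2 - algebraMap ℝ S a * x 0 ^ 2 -
    algebraMap ℝ S b * x 1 ^ 2

lemma map_coplanarQuad (a b : ℝ) (φ : S →ₐ[ℝ] T) (x : Fin 2 → S) :
    φ (coplanarQuad a b x) = coplanarQuad a b (φ ∘ x) := by
  simp only [coplanarQuad, map_sub, map_pow, map_add, map_mul, AlgHom.commutes, Function.comp_apply]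

lemma aeval_coplanarQuad_X (a b : ℝ) (z : Fin 2 → S) :
    MvPolynomial.aeval z (coplanarQuad a b (MvPolynomial.X : Fin 2 → MvPolynomial (Fin 2) ℝ)) =
      coplanarQuad a b z := by
  rw [map_coplanarQuad, show MvPolynomial.aeval z ∘ MvPolynomial.X = z from
    funext (MvPolynomial.aeval_X z)]

lemma isHomogeneous_coplanarQuad_X (a b : ℝ) :
    (coplanarQuad a b (MvPolynomial.X : Fin 2 → MvPolynomial (Fin 2) ℝ)).IsHomogeneous 2 := by
  have hX (i : Fin 2) := MvPolynomial.isHomogeneous_X ℝ i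
  have hC (s : ℝ) := MvPolynomial.isHomogeneous_C (Fin 2) s
  have hsq := (((hC a).mul (hX 0)).add ((hC b).mul (hX 1))).pow 2
  exact (hsq.sub ((hC a).mul ((hX 0).pow 2))).sub ((hC b).mul ((hX 1).pow 2))

lemma coplanarQuad_X_ne_zero {a b : ℝ} (hb : b ≠ 0) (hab : a + b ≠ 1) :
    coplanarQuad a b (MvPolynomial.X : Fin 2 → MvPolynomial (Fin 2) ℝ) ≠ 0 := by
  intro h
  have hz (s t : ℝ) : (a * s + b * t) ^ 2 - a * s ^ 2 - b * t ^ 2 = 0 := by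
    have hst := aeval_coplanarQuad_X a b ![s, t]
    rw [h, map_zero] at hst
    simpa [coplanarQuad] using hst.symm
  have hb₁ : b = 1 := by simpa [sq, hb, sub_eq_zero] using hz 0 1
  have ha₀ : a = 0 := by linear_combination (hz 1 1 - hz 1 0 - hz 0 1) / 2 - a * hb₁
  exact hab (by rw [ha₀, hb₁, zero_add])

/-- The sextic equation for the in-plane direction of a common tangent of four spheres with coplanar
centers, obtained by substituting `t = coplanarQuad a b x / k` in the eliminant. -/
def footSextic (H : Matrix (Fin 2) (Fin 2) ℝ) (K : Fin 2 → ℝ) (R a b k : ℝ) :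
    MvPolynomial (Fin 2) ℝ :=
  footEliminant H K R MvPolynomial.X
    (algebraMap ℝ (MvPolynomial (Fin 2) ℝ) k⁻¹ * coplanarQuad a b MvPolynomial.X)

variable {a b k : ℝ}

lemma aeval_footSextic (z : Fin 2 → S) :
    MvPolynomial.aeval z (footSextic H K R a b k) =
      footEliminant H K R z (algebraMap ℝ S k⁻¹ * coplanarQuad a b z) := by
  rw [footSextic, map_footEliminant, map_mul, map_coplanarQuad, AlgHom.commutes,
    show MvPolynomial.aeval z ∘ MvPolynomial.X = z from funext (MvPolynomial.aeval_X z)]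

lemma isHomogeneous_footSextic : (footSextic H K R a b k).IsHomogeneous 6 :=
  isHomogeneous_footEliminant (MvPolynomial.isHomogeneous_X ℝ)
    ((MvPolynomial.isHomogeneous_C (Fin 2) k⁻¹).mul (isHomogeneous_coplanarQuad_X a b))

section Nonvanishing

variable (hH : H.PosDef) (hk : k ≠ 0) (hF : footSextic H K R a b k = 0)
include hF

lemma footEliminant_eq_zero_of_footSextic_eq_zero (z : Fin 2 → S) :
    footEliminant H K R z (algebraMap ℝ S k⁻¹ * coplanarQuad a b z) = 0 := by
  rw [← aeval_footSextic, hF, map_zero]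

include hH hk

lemma eval_zero_eq_zero_of_footSextic_eq_zero {x : Fin 2 → ℝ[X]} {τ g : ℝ[X]}
    (hx : x 0 * x 1 * (x 0 - x 1) = X * g) (hx₀ : (fun i ↦ (x i).eval 0) ≠ 0)
    (hτ : coplanarQuad a b x = X * τ) : τ.eval 0 = 0 := by
  have h := footEliminant_eq_zero_of_footSextic_eq_zero hF x
  rw [hτ, mul_left_comm] at h
  simpa [hk] using eval_zero_eq_zero_of_footEliminant_eq_zero hH hx hx₀ h

lemma sq_left_ne_self_of_footSextic_eq_zero (hR : R ≠ 0) (hb : b ^ 2 ≠ b) : a ^ 2 ≠ a := by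
  intro ha
  have ha' : (C a ^ 2 : ℝ[X]) = C a := by rw [← C_pow, ha]
  have hab : 2 * a * b = 0 := by
    have hq : coplanarQuad a b ![1, X] = X * (2 * C a * C b + (C b ^ 2 - C b) * X) := by
      simp only [coplanarQuad, algebraMap_eq, Matrix.cons_val_zero, Matrix.cons_val_one]
      linear_combination ha'
    simpa using eval_zero_eq_zero_of_footSextic_eq_zero hH hk hF (g := 1 - X) (by simp)
      (fun h ↦ by simpa using congrFun h 0) hq
  have hq : algebraMap ℝ ℝ[X] k⁻¹ * coplanarQuad a b ![1, X] = C (k⁻¹ * (b ^ 2 - b)) * X ^ 2 := by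
    have hab' : (2 * C a * C b : ℝ[X]) = 0 := by rw [← C_ofNat, ← C_mul, ← C_mul, hab, C_0]
    simp only [coplanarQuad, algebraMap_eq, Matrix.cons_val_zero, Matrix.cons_val_one, C_mul, C_sub,
      C_pow]
    linear_combination C k⁻¹ * ha' + C k⁻¹ * X * hab'
  refine footEliminant_tangent_curve_ne_zero (K := K) hH hR
    (mul_ne_zero (inv_ne_zero hk) (sub_ne_zero.2 hb)) ?_
  exact hq ▸ footEliminant_eq_zero_of_footSextic_eq_zero hF ![1, X]

lemma sq_right_ne_self_of_footSextic_eq_zero (hb : b ≠ 0) (hab : a + b ≠ 1) : b ^ 2 ≠ b := by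
  intro hb₂
  obtain rfl : b = 1 := by simpa [sq, hb] using hb₂
  have hq : coplanarQuad a 1 ![X, 1] = X * ((C a ^ 2 - C a) * X + 2 * C a) := by
    simp only [coplanarQuad, algebraMap_eq, Matrix.cons_val_zero, Matrix.cons_val_one, C_1]
    ring
  have ha : a = 0 := by
    simpa using eval_zero_eq_zero_of_footSextic_eq_zero hH hk hF (g := X - 1) (by simp)
      (fun h ↦ by simpa using congrFun h 1) hq
  exact hab (by rw [ha, zero_add])

lemma sq_add_ne_self_of_footSextic_eq_zero (hb : b ≠ 0) (hab : a + b ≠ 1) :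
    (a + b) ^ 2 ≠ a + b := by
  intro hab₂
  obtain rfl : a = -b := by
    have : (a + b) * (a + b - 1) = 0 := by linear_combination hab₂
    exact eq_neg_of_add_eq_zero_left ((mul_eq_zero.1 this).resolve_right (sub_ne_zero.2 hab))
  have hq : coplanarQuad (-b) b ![1, 1 + X] = X * ((C b ^ 2 - C b) * X - 2 * C b) := by
    simp only [coplanarQuad, algebraMap_eq, Matrix.cons_val_zero, Matrix.cons_val_one, C_neg]
    ring
  have : 2 * b = 0 := by
    simpa using eval_zero_eq_zero_of_footSextic_eq_zero hH hk hF (g := -(1 + X)) (by simp; ring)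
      (fun h ↦ by simpa using congrFun h 0) hq
  simp [hb] at this

end Nonvanishing

-- A direction on which `coplanarQuad` vanishes is a zero of `x 0 * x 1 * (x 0 - x 1)`.
theorem footSextic_ne_zero (hH : H.PosDef) (hR : R ≠ 0) (hk : k ≠ 0) (hb : b ≠ 0)
    (hab : a + b ≠ 1) : footSextic H K R a b k ≠ 0 := by
  intro hF
  have hb₂ := sq_right_ne_self_of_footSextic_eq_zero hH hk hF hb hab
  have hab₂ := sq_add_ne_self_of_footSextic_eq_zero hH hk hF hb hab
  have ha₂ := sq_left_ne_self_of_footSextic_eq_zero hH hk hF hR hb₂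
  have hlead : (a : ℂ) ^ 2 - a ≠ 0 := mod_cast sub_ne_zero.2 ha₂
  obtain ⟨s, hs⟩ := IsAlgClosed.exists_pow_nat_eq
    (discrim ((a : ℂ) ^ 2 - a) (2 * a * b) (b ^ 2 - b)) two_pos
  obtain ⟨ζ, hζ⟩ := exists_quadratic_eq_zero hlead ⟨s, by rw [← hs, sq]⟩
  have h := footEliminant_eq_zero_of_footSextic_eq_zero hF ![ζ, 1]
  have hq : coplanarQuad a b ![ζ, 1] = 0 := by
    simp only [coplanarQuad, Complex.coe_algebraMap, Matrix.cons_val_zero, Matrix.cons_val_one]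
    linear_combination hζ
  rw [hq, mul_zero, footEliminant_zero hH.isHermitian] at h
  have hroot : ζ = 0 ∨ ζ = 1 := by simpa [hH.det_pos.ne', sub_eq_zero] using h
  rcases hroot with rfl | rfl
  · exact hb₂ (by exact_mod_cast (by linear_combination hζ : (b : ℂ) ^ 2 = b))
  · exact hab₂ (by exact_mod_cast (by linear_combination hζ : ((a : ℂ) + b) ^ 2 = a + b))

end Eliminant

section ConstantDirection

open Polynomial

variable {H : Matrix (Fin 2) (Fin 2) ℝ} {K : Fin 2 → ℝ} {R : ℝ}

lemma footEliminant_const_X_ne_zero (hH : H.PosDef) {x : Fin 2 → ℝ} (hx : x ≠ 0) :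
    footEliminant H K R (algebraMap ℝ ℝ[X] ∘ x) X ≠ 0 := by
  intro h
  have h₀ := congrArg (aeval (0 : ℝ)) h
  have heval : aeval (0 : ℝ) ∘ algebraMap ℝ ℝ[X] ∘ x = x := by ext i; simp
  rw [map_footEliminant, aeval_X, map_zero, heval, footEliminant_zero hH.isHermitian] at h₀
  have hprod : x 0 * x 1 * (x 0 - x 1) = 0 := by
    refine pow_eq_zero_iff two_ne_zero |>.1 ((mul_eq_zero.1 h₀).resolve_left ?_)
    simpa using hH.det_pos.ne'
  have hcurve : (algebraMap ℝ ℝ[X] ∘ x) 0 * (algebraMap ℝ ℝ[X] ∘ x) 1 *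
      ((algebraMap ℝ ℝ[X] ∘ x) 0 - (algebraMap ℝ ℝ[X] ∘ x) 1) = X * 0 := by
    simp only [Function.comp_apply, ← map_mul, ← map_sub, hprod, map_zero, mul_zero]
  refine one_ne_zero (α := ℝ) ?_
  rw [← eval_one (x := 0)]
  refine eval_zero_eq_zero_of_footEliminant_eq_zero (K := K) (R := R) hH hcurve ?_
    (by rwa [mul_one])
  simpa only [Function.comp_apply, algebraMap_eq, eval_C] using hx

lemma exists_footEliminant_const_X_eq (hH : H.IsHermitian) (x : Fin 2 → ℝ) :
    ∃ c₀ c₁ c₂, footEliminant H K R (algebraMap ℝ ℝ[X] ∘ x) X =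
      C (gramForm H ℝ K K - 4 * R) * X ^ 3 + C c₂ * X ^ 2 + C c₁ * X + C c₀ := by
  have hg (u w : Fin 2 → ℝ) : gramForm H ℝ[X] (algebraMap ℝ ℝ[X] ∘ u) (algebraMap ℝ ℝ[X] ∘ w) =
      C (gramForm H ℝ u w) := (map_gramForm H (Algebra.ofId ℝ ℝ[X]) u w).symm
  have hφ : footQuad K (algebraMap ℝ ℝ[X] ∘ x) X =
      (X : ℝ[X]) • (algebraMap ℝ ℝ[X] ∘ K) - algebraMap ℝ ℝ[X] ∘ (x ^ 2) := by
    ext1 i; simp [footQuad]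
  refine ⟨gramForm H ℝ (x ^ 2) x ^ 2 - gramForm H ℝ x x * gramForm H ℝ (x ^ 2) (x ^ 2),
    gramForm H ℝ (x ^ 2) (x ^ 2) - 2 * gramForm H ℝ K x * gramForm H ℝ (x ^ 2) x +
      2 * gramForm H ℝ x x * gramForm H ℝ K (x ^ 2),
    gramForm H ℝ K x ^ 2 - 2 * gramForm H ℝ K (x ^ 2) -
      gramForm H ℝ x x * (gramForm H ℝ K K - 4 * R),
    ?_⟩
  rw [footEliminant, footInner, footSphere, hφ]
  simp only [map_sub, LinearMap.sub_apply, map_smul, LinearMap.smul_apply, smul_eq_mul, hg,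
    gramForm_comm hH (x ^ 2) K]
  simp only [algebraMap_eq, C_add, C_sub, C_mul, C_pow, map_ofNat]
  ring

lemma natDegree_footEliminant_const_X_le (hH : H.IsHermitian) (x : Fin 2 → ℝ) :
    (footEliminant H K R (algebraMap ℝ ℝ[X] ∘ x) X).natDegree ≤ 3 := by
  obtain ⟨_, _, _, h⟩ := exists_footEliminant_const_X_eq (K := K) (R := R) hH x
  exact h ▸ natDegree_cubic_le

lemma natDegree_footEliminant_const_X_le_two (hH : H.IsHermitian) (hK : gramForm H ℝ K K = 4 * R)
    (x : Fin 2 → ℝ) : (footEliminant H K R (algebraMap ℝ ℝ[X] ∘ x) X).natDegree ≤ 2 := by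
  obtain ⟨_, _, _, h⟩ := exists_footEliminant_const_X_eq (K := K) (R := R) hH x
  rw [h, hK, sub_self, C_0, zero_mul, zero_add]
  exact natDegree_quadratic_le

end ConstantDirection

section Counting

lemma encard_le_mul_of_subset_biUnion {α β : Type*} {s : Set β} {u : Set α} {f : α → Set β}
    {m n : ℕ} (hs : s ⊆ ⋃ a ∈ u, f a) (hu : u.encard ≤ m) (hf : ∀ a ∈ u, (f a).encard ≤ n) :
    s.encard ≤ (m * n : ℕ) := by
  have hfin : u.Finite := Set.finite_of_encard_le_coe hu
  calc s.encard ≤ ∑ᶠ a ∈ u, (f a).encard := (Set.encard_mono hs).trans (hfin.encard_biUnion_le f)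
    _ = ∑ a ∈ hfin.toFinset, (f a).encard := finsum_mem_eq_finite_toFinset_sum _ hfin
    _ ≤ hfin.toFinset.card • (n : ℕ∞) :=
      Finset.sum_le_card_nsmul _ _ _ fun a ha ↦ hf a (hfin.mem_toFinset.1 ha)
    _ ≤ (m * n : ℕ) := by
      rw [nsmul_eq_mul, Nat.cast_mul, ← hfin.encard_eq_coe_toFinset_card]
      gcongr

lemma encard_rootSet_le {K : Type*} [Field K] (p : Polynomial K) :
    (p.rootSet K).encard ≤ p.natDegree := by
  rw [← (p.rootSet_finite K).cast_ncard_eq]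
  exact_mod_cast p.ncard_rootSet_le K

lemma encard_sq_eq_mul_eq_le_two {K : Type*} [Field K] (a b c : K) :
    {u : K × K | u.1 ^ 2 = a ∧ u.1 * u.2 = b ∧ u.2 ^ 2 = c}.encard ≤ 2 := by
  rcases Set.eq_empty_or_nonempty {u : K × K | u.1 ^ 2 = a ∧ u.1 * u.2 = b ∧ u.2 ^ 2 = c} with
    hempty | ⟨⟨x, y⟩, rfl, rfl, rfl⟩
  · simp [hempty]
  have hsub : {u : K × K | u.1 ^ 2 = x ^ 2 ∧ u.1 * u.2 = x * y ∧ u.2 ^ 2 = y ^ 2} ⊆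
      {(x, y), (-x, -y)} := by
    rintro ⟨z, w⟩ ⟨hz, hzw, hw⟩
    dsimp only at hz hzw hw
    rcases eq_or_ne x 0 with rfl | hx
    · have hz₀ : z = 0 := by simpa using hz
      simpa [hz₀] using sq_eq_sq_iff_eq_or_eq_neg.1 hw
    · rcases sq_eq_sq_iff_eq_or_eq_neg.1 hz with rfl | rfl
      · simp [mul_left_cancel₀ hx hzw]
      · simp [mul_left_cancel₀ (neg_ne_zero.2 hx) (hzw.trans (neg_mul_neg x y).symm)]
  exact (Set.encard_mono hsub).trans
    ((Set.encard_insert_le _ _).trans (by simp [one_add_one_eq_two]))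

end Counting

section PlanarFrame

open Module
open scoped RealInnerProductSpace

variable {ι E : Type*} [Fintype ι] [NormedAddCommGroup E] [InnerProductSpace ℝ E]

/-- `e` is the dual basis, within their span, of vectors `d` spanning a hyperplane with unit normal
`n`. -/
structure IsHyperplaneFrame (d e : ι → E) (n : E) : Prop where
  linearIndependent : LinearIndependent ℝ e
  norm_eq_one : ‖n‖ = 1
  inner_eq_zero (i : ι) : ⟪n, e i⟫ = 0
  sum_inner_smul_add (v : E) : ∑ i, ⟪d i, v⟫ • e i + ⟪n, v⟫ • n = v

lemma exists_isHyperplaneFrame [FiniteDimensional ℝ E] {d : ι → E} (hd : LinearIndependent ℝ d)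
    (hE : finrank ℝ E = Fintype.card ι + 1) : ∃ e n, IsHyperplaneFrame d e n := by
  let W := Submodule.span ℝ (Set.range d)
  let b : Basis ι ℝ W := Basis.span hd
  obtain ⟨e, he⟩ := exists_basis_sum_inner_smul b
  have hW : finrank ℝ Wᗮ = 1 := by
    have := W.finrank_add_finrank_orthogonal
    rw [finrank_eq_card_basis b, hE] at this
    omega
  obtain ⟨n, hn, hspan⟩ : ∃ n : E, ‖n‖ = 1 ∧ Wᗮ = ℝ ∙ n := by
    have : Nontrivial Wᗮ := nontrivial_of_finrank_pos (R := ℝ) (by omega)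
    obtain ⟨n, hn⟩ := exists_norm_eq Wᗮ zero_le_one
    refine ⟨n, hn, (Submodule.eq_of_le_of_finrank_eq ?_ ?_).symm⟩
    · exact (Submodule.span_singleton_le_iff_mem _ _).2 n.2
    · rw [hW, finrank_span_singleton (norm_ne_zero_iff.1 (hn ▸ one_ne_zero))]
  refine ⟨fun i ↦ e i, n, e.linearIndependent.map' W.subtype W.ker_subtype, hn, fun i ↦ ?_,
    fun v ↦ ?_⟩
  · exact Submodule.inner_left_of_mem_orthogonal (e i).2
      (hspan ▸ Submodule.mem_span_singleton_self n)
  · have hproj : ∑ i, ⟪d i, v⟫ • (e i : E) = W.starProjection v := by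
      have hb (i : ι) : ⟪b i, W.orthogonalProjectionOnto v⟫ = ⟪d i, v⟫ := by
        rw [Submodule.inner_orthogonalProjectionOnto_eq_of_mem_left, Basis.span_apply]
      simpa only [hb, Submodule.starProjection_apply, Submodule.coe_sum, Submodule.coe_smul] using
        congrArg Subtype.val (he (W.orthogonalProjectionOnto v))
    have hnormal : ⟪n, v⟫ • n = Wᗮ.starProjection v := by
      simp [hspan, Submodule.starProjection_unit_singleton ℝ hn]
    rw [hproj, hnormal, Submodule.starProjection_add_starProjection_orthogonal]

variable {d e : ι → E} {n : E}

lemma IsHyperplaneFrame.inner_eq [DecidableEq ι] (hf : IsHyperplaneFrame d e n) (u w : E) :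
    ⟪u, w⟫ = gramForm (Matrix.gram ℝ e) ℝ (fun i ↦ ⟪d i, u⟫) (fun i ↦ ⟪d i, w⟫) +
      ⟪n, u⟫ * ⟪n, w⟫ := by
  have hperp (x : ι → ℝ) : ⟪n, ∑ i, x i • e i⟫ = 0 := by
    simp only [inner_sum, inner_smul_right, hf.inner_eq_zero, mul_zero, Finset.sum_const_zero]
  conv_lhs => rw [← hf.sum_inner_smul_add u, ← hf.sum_inner_smul_add w]
  rw [inner_add_left, inner_add_right, inner_add_right, inner_sum_smul_sum_smul_eq_gramForm]
  simp only [real_inner_smul_left, real_inner_smul_right, hperp, real_inner_comm n,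
    real_inner_self_eq_norm_sq, hf.norm_eq_one]
  ring

end PlanarFrame

section CoplanarTangents

open scoped RealInnerProductSpace LinearAlgebra.Projectivization
open MvPolynomial (eval)
open Module

variable {d e : Fin 2 → Pt3} {n p v : Pt3} {K : Fin 2 → ℝ} {R : ℝ}

lemma IsTangentFoot.footEliminant_eq_zero (h : IsTangentFoot d K R p v)
    (hf : IsHyperplaneFrame d e n) :
    footEliminant (Matrix.gram ℝ e) K R (fun i ↦ ⟪d i, v⟫) (‖v‖ ^ 2) = 0 := by
  have hvv := hf.inner_eq v v
  have hpv := hf.inner_eq p v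
  have hpp := hf.inner_eq p p
  rw [real_inner_self_eq_norm_sq] at hvv hpp
  rw [h.inner_eq_zero] at hpv
  rw [h.norm_sq] at hpp
  rw [footEliminant, h.footInner_eq, h.footSphere_eq, eq_neg_of_add_eq_zero_left hpv.symm,
    eq_sub_of_add_eq hpp.symm, eq_sub_of_add_eq hvv.symm]
  ring

/-- The tangent lines with given products `⟪d i, v⟫` and given squared length of a direction `v`. -/
def tangentFootLinesOver (a : Pt3) (d : Fin 2 → Pt3) (K : Fin 2 → ℝ) (R : ℝ) (x : Fin 2 → ℝ)
    (t : ℝ) : Set (Set Pt3) :=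
  {l | ∃ p v, IsTangentFoot d K R p v ∧ (fun i ↦ ⟪d i, v⟫) = x ∧ ‖v‖ ^ 2 = t ∧
    l = lineThrough3 (a + p) v}

-- `x` and `t` determine the line up to the normal components of direction and foot, whose squares
-- and product are determined as well.
lemma encard_tangentFootLinesOver_le_two (hf : IsHyperplaneFrame d e n) (a : Pt3) (K : Fin 2 → ℝ)
    (R : ℝ) (x : Fin 2 → ℝ) (t : ℝ) : (tangentFootLinesOver a d K R x t).encard ≤ 2 := by
  let g := gramForm (Matrix.gram ℝ e) ℝ
  let y : Fin 2 → ℝ := (2 * t)⁻¹ • footQuad K x t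
  let line : ℝ × ℝ → Set Pt3 := fun u ↦
    lineThrough3 (a + (∑ i, y i • e i + u.2 • n)) (∑ i, x i • e i + u.1 • n)
  let U := {u : ℝ × ℝ | u.1 ^ 2 = t - g x x ∧ u.1 * u.2 = -g y x ∧ u.2 ^ 2 = R - g y y}
  have hcover : tangentFootLinesOver a d K R x t ⊆ line '' U := by
    rintro _ ⟨p, v, h, rfl, rfl, rfl⟩
    have hy : y = fun i ↦ ⟪d i, p⟫ := by
      simp only [y, h.footQuad_eq]
      exact inv_smul_smul₀ (by simpa using h.ne_zero) _
    have hvv := hf.inner_eq v v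
    have hpv := hf.inner_eq p v
    have hpp := hf.inner_eq p p
    rw [real_inner_self_eq_norm_sq] at hvv hpp
    rw [h.inner_eq_zero] at hpv
    rw [h.norm_sq] at hpp
    refine ⟨(⟪n, v⟫, ⟪n, p⟫), ⟨?_, ?_, ?_⟩, ?_⟩
    · linear_combination -hvv
    · rw [hy]; linear_combination -hpv
    · rw [hy]; linear_combination -hpp
    · simp only [line, hy, hf.sum_inner_smul_add]
  calc _ ≤ U.encard := (Set.encard_mono hcover).trans (Set.encard_image_le line U)
    _ ≤ 2 := encard_sq_eq_mul_eq_le_two _ _ _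

lemma IsTangentFoot.perpendicular (h : IsTangentFoot d K R p v) (hf : IsHyperplaneFrame d e n)
    (hx : (fun i ↦ ⟪d i, v⟫) = 0) (o : Pt3) :
    gramForm (Matrix.gram ℝ e) ℝ K K = 4 * R ∧
      lineThrough3 (o + p) v = lineThrough3 (o + (2⁻¹ : ℝ) • ∑ i, K i • e i) n := by
  have hp (i : Fin 2) : ⟪d i, p⟫ = 2⁻¹ * K i := by
    have hi := h.two_mul_inner i
    rw [congrFun hx i, Pi.zero_apply] at hi
    refine mul_left_cancel₀ (pow_ne_zero 2 (norm_ne_zero_iff.2 h.ne_zero)) ?_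
    linear_combination hi / 2
  have hv : v = ⟪n, v⟫ • n := by
    simpa [congrFun hx] using (hf.sum_inner_smul_add v).symm
  have hnv : ⟪n, v⟫ ≠ 0 := fun h₀ ↦ h.ne_zero (by rw [hv, h₀, zero_smul])
  have hnp : ⟪n, p⟫ = 0 := by
    simpa [h.inner_eq_zero, hx, hnv] using hf.inner_eq p v
  constructor
  · have hpp := hf.inner_eq p p
    rw [real_inner_self_eq_norm_sq, h.norm_sq, hnp, funext hp] at hpp
    rw [show (fun i ↦ 2⁻¹ * K i) = (2⁻¹ : ℝ) • K from rfl, LinearMap.map_smul₂, map_smul,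
      smul_eq_mul, smul_eq_mul] at hpp
    linear_combination -4 * hpp
  · rw [hv, lineThrough3_smul _ _ hnv, ← hf.sum_inner_smul_add p, hnp, zero_smul, add_zero]
    simp only [hp, mul_smul, ← Finset.smul_sum]

section ThreeVectors

variable {d : Fin 3 → Pt3} {K : Fin 3 → ℝ} {a b : ℝ}

lemma IsTangentFoot.mul_eq_coplanarQuad (h : IsTangentFoot d K R p v)
    (hd : d 2 = a • d 0 + b • d 1) :
    (K 2 - a * K 0 - b * K 1) * ‖v‖ ^ 2 = coplanarQuad a b fun i ↦ ⟪(d ∘ Fin.castSucc) i, v⟫ := by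
  have h₀ := h.two_mul_inner 0
  have h₁ := h.two_mul_inner 1
  have h₂ := h.two_mul_inner 2
  simp only [hd, inner_add_left, real_inner_smul_left] at h₂
  simp only [coplanarQuad, Algebra.algebraMap_self, RingHom.id_apply, Function.comp_apply,
    Fin.castSucc_zero, Fin.castSucc_one]
  linear_combination -h₂ + a * h₀ + b * h₁

/-- The tangent lines that are not perpendicular to the plane of `d 0` and `d 1`. -/
def obliqueTangentFootLines (o : Pt3) (d : Fin 3 → Pt3) (K : Fin 3 → ℝ) (R : ℝ) : Set (Set Pt3) :=
  {l | ∃ p v, IsTangentFoot d K R p v ∧ (fun i ↦ ⟪(d ∘ Fin.castSucc) i, v⟫) ≠ 0 ∧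
    l = lineThrough3 (o + p) v}

lemma exists_mem_tangentFootLinesOver_rep {o : Pt3} {l : Set Pt3}
    (hf : IsHyperplaneFrame (d ∘ Fin.castSucc) e n) (hd : d 2 = a • d 0 + b • d 1)
    (hl : l ∈ obliqueTangentFootLines o d K R) :
    ∃ (P : ℙ ℝ (Fin 2 → ℝ)) (t : ℝ), (K 2 - a * K 0 - b * K 1) * t = coplanarQuad a b P.rep ∧
      footEliminant (Matrix.gram ℝ e) (K ∘ Fin.castSucc) R P.rep t = 0 ∧
      l ∈ tangentFootLinesOver o (d ∘ Fin.castSucc) (K ∘ Fin.castSucc) R P.rep t := by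
  obtain ⟨p, v, h, hx, rfl⟩ := hl
  obtain ⟨P, s, hs, hP⟩ := exists_smul_inner_eq_rep _ hx
  replace h := h.smul hs
  refine ⟨P, ‖s • v‖ ^ 2, hP ▸ h.mul_eq_coplanarQuad hd,
    hP ▸ (h.comp Fin.castSucc).footEliminant_eq_zero hf, p, s • v, h.comp _, hP, rfl, ?_⟩
  rw [lineThrough3_smul _ v hs]

variable (o : Pt3) (hf : IsHyperplaneFrame (d ∘ Fin.castSucc) e n) (hd : d 2 = a • d 0 + b • d 1)
  (hb : b ≠ 0) (hab : a + b ≠ 1)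
include hf hd hb hab

lemma encard_tangentFootLines_le_of_ne_zero (hR : R ≠ 0) (hk : K 2 - a * K 0 - b * K 1 ≠ 0) :
    (tangentFootLines o d K R).encard ≤ 12 := by
  let k := K 2 - a * K 0 - b * K 1
  let F := footSextic (Matrix.gram ℝ e) (K ∘ Fin.castSucc) R a b k
  have hcover : tangentFootLines o d K R ⊆ ⋃ P ∈ {P : ℙ ℝ (Fin 2 → ℝ) | eval P.rep F = 0},
      tangentFootLinesOver o (d ∘ Fin.castSucc) (K ∘ Fin.castSucc) R P.rep
        (k⁻¹ * coplanarQuad a b P.rep) := by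
    rintro _ ⟨p, v, h, rfl⟩
    have hx : (fun i ↦ ⟪(d ∘ Fin.castSucc) i, v⟫) ≠ 0 := fun hx ↦ by
      have ht := h.mul_eq_coplanarQuad hd
      rw [hx] at ht
      simp [coplanarQuad, hk, h.ne_zero] at ht
    obtain ⟨P, t, ht, hP, hl⟩ := exists_mem_tangentFootLinesOver_rep hf hd ⟨p, v, h, hx, rfl⟩
    have ht' : t = k⁻¹ * coplanarQuad a b P.rep := by rw [← ht, inv_mul_cancel_left₀ hk]
    refine Set.mem_biUnion (x := P) ?_ (ht' ▸ hl)
    rw [Set.mem_ofPred_eq, ← MvPolynomial.coe_aeval_eq_eval, RingHom.coe_coe, aeval_footSextic,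
      Algebra.algebraMap_self, RingHom.id_apply, ← ht', hP]
  have hF : F ≠ 0 := footSextic_ne_zero
    (Matrix.posDef_gram_of_linearIndependent hf.linearIndependent) hR hk hb hab
  exact encard_le_mul_of_subset_biUnion (m := 6) (n := 2) hcover
    (encard_zeros_binaryForm_le isHomogeneous_footSextic hF)
    fun P _ ↦ encard_tangentFootLinesOver_le_two hf o _ R P.rep _

lemma encard_obliqueTangentFootLines_le (hk : K 2 - a * K 0 - b * K 1 = 0) {m : ℕ}
    (hm : ∀ x, (footEliminant (Matrix.gram ℝ e) (K ∘ Fin.castSucc) R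
      (algebraMap ℝ (Polynomial ℝ) ∘ x) Polynomial.X).natDegree ≤ m) :
    (obliqueTangentFootLines o d K R).encard ≤ (2 * (m * 2) : ℕ) := by
  let Q : MvPolynomial (Fin 2) ℝ := coplanarQuad a b MvPolynomial.X
  let E (x : Fin 2 → ℝ) := footEliminant (Matrix.gram ℝ e) (K ∘ Fin.castSucc) R
    (algebraMap ℝ (Polynomial ℝ) ∘ x) Polynomial.X
  have hcover : obliqueTangentFootLines o d K R ⊆
      ⋃ P ∈ {P : ℙ ℝ (Fin 2 → ℝ) | eval P.rep Q = 0}, ⋃ t ∈ (E P.rep).rootSet ℝ,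
        tangentFootLinesOver o (d ∘ Fin.castSucc) (K ∘ Fin.castSucc) R P.rep t := by
    intro l hl
    obtain ⟨P, t, ht, hP, hl⟩ := exists_mem_tangentFootLinesOver_rep hf hd hl
    refine Set.mem_biUnion (x := P) ?_ (Set.mem_biUnion (x := t) ?_ hl)
    · rw [Set.mem_ofPred_eq, ← MvPolynomial.coe_aeval_eq_eval, RingHom.coe_coe,
        aeval_coplanarQuad_X, ← ht, hk, zero_mul]
    · refine (Polynomial.mem_rootSet_of_ne (footEliminant_const_X_ne_zero
        (Matrix.posDef_gram_of_linearIndependent hf.linearIndependent) P.rep_nonzero)).2 ?_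
      rw [map_footEliminant, Polynomial.aeval_X, ← hP]
      congr 1
      ext i
      simp
  refine encard_le_mul_of_subset_biUnion hcover (encard_zeros_binaryForm_le
    (isHomogeneous_coplanarQuad_X a b) (coplanarQuad_X_ne_zero hb hab)) fun P _ ↦ ?_
  exact encard_le_mul_of_subset_biUnion subset_rfl
    ((encard_rootSet_le (E P.rep)).trans (mod_cast hm P.rep))
    fun t _ ↦ encard_tangentFootLinesOver_le_two hf o _ R P.rep t

theorem encard_tangentFootLines_le_of_coplanar (hR : R ≠ 0) :
    (tangentFootLines o d K R).encard ≤ 12 := by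
  by_cases hk : K 2 - a * K 0 - b * K 1 = 0
  swap
  · exact encard_tangentFootLines_le_of_ne_zero o hf hd hb hab hR hk
  have hH := Matrix.posDef_gram_of_linearIndependent hf.linearIndependent
  by_cases hperp : ∃ p v, IsTangentFoot d K R p v ∧ (fun i ↦ ⟪(d ∘ Fin.castSucc) i, v⟫) = 0
  · obtain ⟨_, _, h₀, hx₀⟩ := hperp
    have hsub : tangentFootLines o d K R ⊆ insert
        (lineThrough3 (o + (2⁻¹ : ℝ) • ∑ i : Fin 2, K i.castSucc • e i) n)
        (obliqueTangentFootLines o d K R) := by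
      rintro _ ⟨p, v, h, rfl⟩
      by_cases hx : (fun i ↦ ⟪(d ∘ Fin.castSucc) i, v⟫) = 0
      · exact .inl ((h.comp Fin.castSucc).perpendicular hf hx o).2
      · exact .inr ⟨p, v, h, hx, rfl⟩
    calc (tangentFootLines o d K R).encard ≤ (obliqueTangentFootLines o d K R).encard + 1 :=
        (Set.encard_mono hsub).trans (Set.encard_insert_le _ _)
      _ ≤ (2 * (2 * 2) : ℕ) + 1 := by
        gcongr
        exact encard_obliqueTangentFootLines_le o hf hd hb hab hk
          (natDegree_footEliminant_const_X_le_two hH.isHermitian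
            ((h₀.comp Fin.castSucc).perpendicular hf hx₀ o).1)
      _ ≤ 12 := by norm_num
  · have hsub : tangentFootLines o d K R ⊆ obliqueTangentFootLines o d K R := by
      rintro _ ⟨p, v, h, rfl⟩
      exact ⟨p, v, h, fun hx ↦ hperp ⟨p, v, h, hx⟩, rfl⟩
    exact (Set.encard_mono hsub).trans (encard_obliqueTangentFootLines_le o hf hd hb hab hk
      (natDegree_footEliminant_const_X_le hH.isHermitian))

end ThreeVectors

end CoplanarTangents

section AffineRelations

open Module

lemma three_le_card_filter_ne_zero {ι k V : Type*} [Fintype ι] [Field k] [DecidableEq k]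
    [AddCommGroup V] [Module k V] {c : ι → V} (hc : Function.Injective c) {w : ι → k} (hw : w ≠ 0)
    (hsum : ∑ i, w i = 0) (hcomb : ∑ i, w i • c i = 0) :
    3 ≤ (Finset.univ.filter fun i ↦ w i ≠ 0).card := by
  classical
  let s := Finset.univ.filter fun i ↦ w i ≠ 0
  have hs {i : ι} : i ∈ s ↔ w i ≠ 0 := by simp [s]
  have hsum' : ∑ i ∈ s, w i = 0 := by
    rw [Finset.sum_filter_ne_zero, hsum]
  have hcomb' : ∑ i ∈ s, w i • c i = 0 := by
    rw [← hcomb]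
    refine Finset.sum_subset s.subset_univ fun i _ hi ↦ ?_
    rw [hs, not_not] at hi
    rw [hi, zero_smul]
  by_contra! hcard
  change s.card < 3 at hcard
  have hcases : s.card = 0 ∨ s.card = 1 ∨ s.card = 2 := by omega
  rcases hcases with h₀ | h₁ | h₂
  · refine hw (funext fun i ↦ by_contra fun hi ↦ ?_)
    exact Finset.notMem_empty i (Finset.card_eq_zero.1 h₀ ▸ hs.2 hi)
  · obtain ⟨i, hi⟩ := Finset.card_eq_one.1 h₁
    rw [hi, Finset.sum_singleton] at hsum'
    exact hs.1 (hi ▸ Finset.mem_singleton_self i) hsum'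
  · obtain ⟨i, j, hij, hij'⟩ := Finset.card_eq_two.1 h₂
    rw [hij', Finset.sum_pair hij] at hsum' hcomb'
    have hi : w i ≠ 0 := hs.1 (hij' ▸ Finset.mem_insert_self i _)
    rw [eq_neg_of_add_eq_zero_right hsum', neg_smul, ← sub_eq_add_neg, ← smul_sub] at hcomb'
    exact hij (hc (sub_eq_zero.1 ((smul_eq_zero.1 hcomb').resolve_left hi)))

lemma exists_perm_affine_relation {k V : Type*} [Field k] [AddCommGroup V] [Module k V]
    {c : Fin 4 → V} (hc : Function.Injective c) (hdep : ¬ AffineIndependent k c) :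
    ∃ (e : Equiv.Perm (Fin 4)) (w : Fin 4 → k), (∀ i ≠ 1, w i ≠ 0) ∧
      ∑ i, w i = 0 ∧ ∑ i, w i • c (e i) = 0 := by
  classical
  obtain ⟨w, hw, hsum, hcomb⟩ : ∃ w : Fin 4 → k, w ≠ 0 ∧ ∑ i, w i = 0 ∧ ∑ i, w i • c i = 0 := by
    rw [affineIndependent_iff_of_fintype] at hdep
    push Not at hdep
    obtain ⟨w, hsum, hcomb, i, hi⟩ := hdep
    rw [Finset.univ.weightedVSub_eq_linear_combination hsum] at hcomb
    exact ⟨w, fun h ↦ hi (congrFun h i), hsum, hcomb⟩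
  obtain ⟨m, hm⟩ : ∃ m, ∀ i ≠ m, w i ≠ 0 := by
    have hcompl : (Finset.univ.filter fun i ↦ w i ≠ 0)ᶜ.card ≤ 1 := by
      have := three_le_card_filter_ne_zero hc hw hsum hcomb
      rw [Finset.card_compl, Fintype.card_fin]
      omega
    obtain ⟨m, hm⟩ := Finset.card_le_one_iff_subset_singleton.1 hcompl
    exact ⟨m, fun i hi hw ↦ hi (Finset.mem_singleton.1 (hm (by simpa using hw)))⟩
  let e := Equiv.swap 1 m
  refine ⟨e, w ∘ e, fun i hi ↦ hm _ fun h ↦ hi ?_, ?_, ?_⟩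
  · exact e.injective (h.trans (Equiv.swap_apply_left 1 m).symm)
  · exact (Equiv.sum_comp e w).trans hsum
  · exact (Equiv.sum_comp e fun i ↦ w i • c i).trans hcomb

lemma linearIndependent_sub_of_not_collinear {k V : Type*} [Field k] [AddCommGroup V]
    [Module k V] {c : Fin 4 → V} (h₁ : c 1 ≠ c 0) {a b : k}
    (hd : c 3 - c 0 = a • (c 1 - c 0) + b • (c 2 - c 0)) (hcol : ¬ Collinear k (Set.range c)) :
    LinearIndependent k ![c 1 - c 0, c 2 - c 0] := by
  rw [LinearIndependent.pair_iff' (sub_ne_zero.2 h₁)]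
  refine fun s hs ↦ hcol ((collinear_iff_of_mem (Set.mem_range_self 0)).2 ⟨c 1 - c 0, ?_⟩)
  have hline {x : V} {t : k} (h : x - c 0 = t • (c 1 - c 0)) :
      ∃ t : k, x = t • (c 1 - c 0) +ᵥ c 0 :=
    ⟨t, (eq_vadd_iff_vsub_eq x _ _).2 h⟩
  rw [Set.forall_mem_range, Fin.forall_fin_succ, Fin.forall_fin_succ, Fin.forall_fin_two]
  refine ⟨hline (t := 0) ?_, hline (t := 1) ?_, hline hs.symm, hline (t := a + b * s) ?_⟩
  · rw [sub_self, zero_smul]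
  · exact (one_smul k _).symm
  · exact hd.trans (by rw [← hs, smul_smul, ← add_smul])

lemma exists_perm_sub_eq_smul_add_smul {k V : Type*} [Field k] [AddCommGroup V] [Module k V]
    {c : Fin 4 → V} (hc : Function.Injective c) (hdep : ¬ AffineIndependent k c) :
    ∃ (e : Equiv.Perm (Fin 4)) (a b : k), b ≠ 0 ∧ a + b ≠ 1 ∧
      c (e 3) - c (e 0) = a • (c (e 1) - c (e 0)) + b • (c (e 2) - c (e 0)) := by
  obtain ⟨e, w, hw, hsum, hcomb⟩ := exists_perm_affine_relation hc hdep
  rw [Fin.sum_univ_four] at hsum hcomb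
  have h₃ : w 3 ≠ 0 := hw 3 (by decide)
  refine ⟨e, -w 1 / w 3, -w 2 / w 3, ?_, ?_, ?_⟩
  · exact div_ne_zero (neg_ne_zero.2 (hw 2 (by decide))) h₃
  · rw [← add_div, Ne, div_eq_one_iff_eq h₃]
    exact fun h ↦ hw 0 (by decide) (by linear_combination hsum + h)
  · refine smul_right_injective V h₃ (sub_eq_zero.1 ?_)
    dsimp only
    rw [smul_add, smul_smul, smul_smul, mul_div_cancel₀ _ h₃, mul_div_cancel₀ _ h₃, ← hcomb,
      show w 0 = -(w 1 + w 2 + w 3) by linear_combination hsum]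
    module

end AffineRelations

section Centers

theorem encard_commonTangents_le_of_affineIndependent {c : Fin 4 → Pt3} (r : Fin 4 → ℝ)
    (hc : AffineIndependent ℝ c) : (commonTangents c r).encard ≤ 12 := by
  have hli : LinearIndependent ℝ fun i : Fin 3 ↦ c i.succ - c 0 :=
    ((affineIndependent_iff_linearIndependent_vsub ℝ c 0).1 hc).comp
      (fun i : Fin 3 ↦ ⟨i.succ, i.succ_ne_zero⟩) fun i j hij ↦ by simpa using hij
  have hsub := commonTangents_subset_tangentFootLines c r 0 Fin.succ
  rw [← coe_basisOfLinearIndependentOfCardEqFinrank hli (by simp)] at hsub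
  exact (Set.encard_mono hsub).trans (encard_tangentFootLines_le_of_basis _ _ _ _)

theorem encard_commonTangents_le_of_not_affineIndependent {c : Fin 4 → Pt3} {r : Fin 4 → ℝ}
    (hr : ∀ i, r i ≠ 0) (hinj : Function.Injective c) (hc : ¬ AffineIndependent ℝ c)
    (hcol : ¬ Collinear ℝ (Set.range c)) : (commonTangents c r).encard ≤ 12 := by
  obtain ⟨e, a, b, hb, hab, hd⟩ := exists_perm_sub_eq_smul_add_smul hinj hc
  have hli : LinearIndependent ℝ ![c (e 1) - c (e 0), c (e 2) - c (e 0)] :=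
    linearIndependent_sub_of_not_collinear (c := c ∘ e) (hinj.ne (e.injective.ne (by decide))) hd
      (by rwa [e.surjective.range_comp])
  rw [← commonTangents_comp_equiv e]
  have hplane : (fun i : Fin 3 ↦ c (e i.succ) - c (e 0)) ∘ Fin.castSucc =
      ![c (e 1) - c (e 0), c (e 2) - c (e 0)] := by
    ext1 i
    fin_cases i <;> rfl
  obtain ⟨f, n, hf⟩ := exists_isHyperplaneFrame (hplane ▸ hli) (by simp)
  exact (Set.encard_mono (commonTangents_subset_tangentFootLines (c ∘ e) (r ∘ e) 0 Fin.succ)).trans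
    (encard_tangentFootLines_le_of_coplanar _ hf hd hb hab (pow_ne_zero 2 (hr (e 0))))

end Centers

theorem four_spheres_common_tangent_lines
    (c1 c2 c3 c4 : Pt3) (r1 r2 r3 r4 : ℝ)
    (hr1 : 0 < r1) (hr2 : 0 < r2) (hr3 : 0 < r3) (hr4 : 0 < r4)
    (h12 : Metric.sphere c1 r1 ≠ Metric.sphere c2 r2)
    (h13 : Metric.sphere c1 r1 ≠ Metric.sphere c3 r3)
    (h14 : Metric.sphere c1 r1 ≠ Metric.sphere c4 r4)
    (h23 : Metric.sphere c2 r2 ≠ Metric.sphere c3 r3)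
    (h24 : Metric.sphere c2 r2 ≠ Metric.sphere c4 r4)
    (h34 : Metric.sphere c3 r3 ≠ Metric.sphere c4 r4)
    (hnc : ¬ Collinear ℝ ({c1, c2, c3, c4} : Set Pt3)) :
    ({l : Set Pt3 | IsLine3 l ∧ Tangent3 l (Metric.sphere c1 r1) ∧
        Tangent3 l (Metric.sphere c2 r2) ∧ Tangent3 l (Metric.sphere c3 r3) ∧
        Tangent3 l (Metric.sphere c4 r4)}).encard ≤ 12 := by
  let c : Fin 4 → Pt3 := ![c1, c2, c3, c4]
  let r : Fin 4 → ℝ := ![r1, r2, r3, r4]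
  have hset : {l : Set Pt3 | IsLine3 l ∧ Tangent3 l (Metric.sphere c1 r1) ∧
      Tangent3 l (Metric.sphere c2 r2) ∧ Tangent3 l (Metric.sphere c3 r3) ∧
      Tangent3 l (Metric.sphere c4 r4)} = commonTangents c r := by
    ext l
    simp [commonTangents, c, r, Fin.forall_fin_succ]
  have hr (i : Fin 4) : 0 < r i := by
    fin_cases i <;> assumption
  have hsphere : Function.Injective fun i ↦ Metric.sphere (c i) (r i) := by
    intro i j hij
    fin_cases i <;> fin_cases j <;> simp_all [c, r]
  rw [hset]
  rcases (commonTangents c r).eq_empty_or_nonempty with hempty | hne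
  · rw [hempty, Set.encard_empty]
    exact zero_le
  have hinj := injective_of_commonTangents_nonempty hr hsphere hne
  by_cases hc : AffineIndependent ℝ c
  · exact encard_commonTangents_le_of_affineIndependent r hc
  refine encard_commonTangents_le_of_not_affineIndependent (fun i ↦ (hr i).ne') hinj hc ?_
  rwa [Matrix.range_cons, Matrix.range_cons, Matrix.range_cons, Matrix.range_cons,
    Matrix.range_empty, Set.union_empty]
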